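/- arXiv:2509.24687 — 3 statements merged into one kernel-verified Lean document; each statement's English description precedes it below -/
import Mathlib

section
/- For every density ρ > 0 and every scale parameter α > 0, the Gaussian polarization of the rescaled hexagonal lattice exceeds that of the rescaled honeycomb structure: the infimum over z ∈ ℝ² of ∑_{λ ∈ Λ₂} exp(−πα‖ρ^{-1/2}λ − z‖²) is strictly greater than the infimum over z ∈ ℝ² of ∑_{γ ∈ Γ₂} exp(−πα‖ρ^{-1/2}γ − z‖²). -/
open Real MeasureTheory
open scoped RealInnerProductSpace ENNReal

/-- The vector `(x, y)` in the Euclidean plane `ℝ²`. -/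
noncomputable def vec2 (x y : ℝ) : EuclideanSpace ℝ (Fin 2) :=
  (WithLp.equiv 2 (Fin 2 → ℝ)).symm ![x, y]

/-- The hexagonal lattice `Λ₂` of density 1:
`Λ₂ = {√(2/√3)·(k + l/2, l·√3/2) : (k,l) ∈ ℤ²}`. -/
noncomputable def hexLattice : Set (EuclideanSpace ℝ (Fin 2)) :=
  {p | ∃ k l : ℤ,
    p = Real.sqrt (2 / Real.sqrt 3) • vec2 ((k : ℝ) + (l : ℝ) / 2) ((l : ℝ) * (Real.sqrt 3 / 2))}

/-- The deep hole `z₀ = √(2/√3)·(1/2, 1/(2√3))` of the hexagonal lattice. -/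
noncomputable def deepHole : EuclideanSpace ℝ (Fin 2) :=
  Real.sqrt (2 / Real.sqrt 3) • vec2 (1 / 2) (1 / (2 * Real.sqrt 3))

/-- The honeycomb structure `Γ₂ = √2·(Λ₂ ∪ (Λ₂ + z₀))` of density 1. -/
noncomputable def honeycomb : Set (EuclideanSpace ℝ (Fin 2)) :=
  (fun p => Real.sqrt 2 • p) '' (hexLattice ∪ (fun p => p + deepHole) '' hexLattice)

/-!
Write `Θ_b(z) = ∑ exp (-π b ‖l - z‖²)` for the Gaussian sum over the hexagonal lattice. At the
point `2 √2 z₀`, the Gaussian sum of the honeycomb structure is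
`Θ_{2b}(2 z₀) + Θ_{2b}(z₀) = 2 Θ_{2b}(z₀)`, since `3 z₀` is a lattice vector, so it suffices that
`2 Θ_{2b}(z₀) < Θ_b(z)` for every `z`. For small `b` this follows from Poisson summation: up to an
error of third order, `b Θ_b(z)` is `1` plus the contribution of the first shell of the dual
lattice, which is at least `-3` times the weight of the shell, with equality at `z₀`. For large `b`
it follows from keeping only the lattice point nearest to `z` in `Θ_b(z)`, whose distance from `z`
is at most `‖z₀‖`, and from bounding `Θ_{2b}(z₀)` by geometric series. Both estimates are explicit
because the lattice is the union of a rectangular lattice and its translate by the centre of the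
rectangle, so that `Θ_b` is a sum of two products of one-dimensional theta kernels.
-/

section ThetaKernels

open HurwitzZeta

lemma exp_neg_pi_mul_lt_one {t : ℝ} (ht : 0 < t) : rexp (-π * t) < 1 :=
  Real.exp_lt_one_iff.mpr (by nlinarith [pi_pos])

lemma exp_neg_pi_mul_three_mul (t : ℝ) : rexp (-π * (3 * t)) = rexp (-π * t) ^ 3 := by
  rw [← Real.exp_nat_mul]
  congr 1
  push_cast
  ring

lemma exp_neg_pi_mul_sq_mul (k : ℕ) (t : ℝ) :
    rexp (-π * (k : ℝ) ^ 2 * t) = rexp (-π * t) ^ k ^ 2 := by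
  rw [← Real.exp_nat_mul]
  congr 1
  push_cast
  ring

lemma abs_two_mul_cos_mul_le (θ : ℝ) {e : ℝ} (he : 0 ≤ e) : |2 * cos θ * e| ≤ 2 * e := by
  rw [abs_mul, abs_mul, abs_two, abs_of_nonneg he]
  have := abs_cos_le_one θ
  gcongr
  linarith

/-- The contribution of the odd frequencies to the cosine series of `cosKernel a t`. -/
noncomputable def cosKernelOddPart (a t : ℝ) : ℝ :=
  (cosKernel (a : UnitAddCircle) t - cosKernel ((a + 1 / 2 : ℝ) : UnitAddCircle) t) / 2

lemma hasSum_nat_cosKernel₀_add_half (a : ℝ) {t : ℝ} (ht : 0 < t) :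
    HasSum (fun n : ℕ ↦ (-1) ^ (n + 1) *
        (2 * cos (2 * π * a * (n + 1)) * rexp (-π * (n + 1) ^ 2 * t)))
      (cosKernel ((a + 1 / 2 : ℝ) : UnitAddCircle) t - 1) := by
  convert hasSum_nat_cosKernel₀ (a + 1 / 2) ht using 2 with n
  have hangle : 2 * π * (a + 1 / 2) * (n + 1) = 2 * π * a * (n + 1) + (n + 1 : ℕ) * π := by
    push_cast
    ring
  rw [hangle, cos_add_nat_mul_pi]
  ring

lemma hasSum_cosKernelOddPart (a : ℝ) {t : ℝ} (ht : 0 < t) :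
    HasSum (fun k : ℕ ↦ 2 * cos (2 * π * a * (2 * k + 1)) * rexp (-π * (2 * k + 1) ^ 2 * t))
      (cosKernelOddPart a t) := by
  have hsum := ((hasSum_nat_cosKernel₀ a ht).sub (hasSum_nat_cosKernel₀_add_half a ht)).div_const 2
  have hinj : Function.Injective fun k : ℕ ↦ 2 * k := mul_right_injective₀ two_ne_zero
  rw [sub_sub_sub_cancel_right, ← cosKernelOddPart, ← hinj.hasSum_iff fun n hn ↦ ?_] at hsum
  · refine hsum.congr_fun fun k ↦ ?_
    simp [pow_succ]
  · have hodd : Odd n := Nat.not_even_iff_odd.mp fun ⟨k, hk⟩ ↦ hn ⟨k, by simp [hk, two_mul]⟩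
    simp [hodd.add_one.neg_one_pow]

lemma cosKernel_add_cosKernel_add_half (a : ℝ) {t : ℝ} (ht : 0 < t) :
    cosKernel (a : UnitAddCircle) t + cosKernel ((a + 1 / 2 : ℝ) : UnitAddCircle) t =
      2 * cosKernel ((2 * a : ℝ) : UnitAddCircle) (4 * t) := by
  have hsum := ((hasSum_nat_cosKernel₀ a ht).add (hasSum_nat_cosKernel₀_add_half a ht)).div_const 2
  have hinj : Function.Injective fun k : ℕ ↦ 2 * k + 1 := fun _ _ h ↦ by simpa using h
  rw [← hinj.hasSum_iff fun n hn ↦ ?_] at hsum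
  · have heq := hsum.unique <| by
      refine (hasSum_nat_cosKernel₀ (2 * a) (by positivity : 0 < 4 * t)).congr_fun fun k ↦ ?_
      have hsign : (-1 : ℝ) ^ (2 * k + 1 + 1) = 1 := Even.neg_one_pow ⟨k + 1, by ring⟩
      simp only [Function.comp_apply, hsign]
      push_cast
      ring_nf
    linarith
  · have heven : Even n := Nat.not_odd_iff_even.mp fun ⟨k, hk⟩ ↦ hn ⟨k, hk.symm⟩
    simp [heven.add_one.neg_one_pow]

lemma cosKernel_eq_add_oddPart (a : ℝ) {t : ℝ} (ht : 0 < t) :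
    cosKernel (a : UnitAddCircle) t =
      cosKernel ((2 * a : ℝ) : UnitAddCircle) (4 * t) + cosKernelOddPart a t := by
  have := cosKernel_add_cosKernel_add_half a ht
  unfold cosKernelOddPart
  linarith

lemma cosKernel_add_half_eq_sub_oddPart (a : ℝ) {t : ℝ} (ht : 0 < t) :
    cosKernel ((a + 1 / 2 : ℝ) : UnitAddCircle) t =
      cosKernel ((2 * a : ℝ) : UnitAddCircle) (4 * t) - cosKernelOddPart a t := by
  have := cosKernel_add_cosKernel_add_half a ht
  unfold cosKernelOddPart
  linarith

lemma abs_one_add_sum_range_sub_cosKernel_le (a : ℝ) {t : ℝ} (ht : 0 < t) (N : ℕ) :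
    |1 + ∑ n ∈ Finset.range N, 2 * cos (2 * π * a * (n + 1)) * rexp (-π * (n + 1) ^ 2 * t)
        - cosKernel (a : UnitAddCircle) t| ≤
      2 * rexp (-π * t) ^ (3 * N + 1) / (1 - rexp (-π * t) ^ 3) := by
  have hq0 := exp_nonneg (-π * t)
  have hq1 := exp_neg_pi_mul_lt_one ht
  have hterm (n : ℕ) : ‖2 * cos (2 * π * a * (n + 1)) * rexp (-π * (n + 1) ^ 2 * t)‖ ≤
      2 * rexp (-π * t) * (rexp (-π * t) ^ 3) ^ n := by
    refine (abs_two_mul_cos_mul_le _ (exp_nonneg _)).trans ?_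
    have hexp := exp_neg_pi_mul_sq_mul (n + 1) t
    push_cast at hexp
    rw [hexp, mul_assoc, ← pow_mul, ← pow_succ']
    gcongr 2 * ?_
    exact pow_le_pow_of_le_one hq0 hq1.le (by nlinarith [Nat.le_self_pow two_ne_zero n])
  have htail := norm_sub_le_of_geometric_bound_of_hasSum (pow_lt_one₀ hq0 hq1 three_ne_zero) hterm
    (hasSum_nat_cosKernel₀ a ht) N
  rwa [Real.norm_eq_abs, ← sub_add, sub_add_eq_add_sub, add_comm _ (1 : ℝ),
    mul_assoc 2 (rexp _), ← pow_mul, ← pow_succ'] at htail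

lemma abs_sum_range_sub_cosKernelOddPart_le (a : ℝ) {t : ℝ} (ht : 0 < t) (N : ℕ) :
    |∑ k ∈ Finset.range N, 2 * cos (2 * π * a * (2 * k + 1)) * rexp (-π * (2 * k + 1) ^ 2 * t)
        - cosKernelOddPart a t| ≤
      2 * rexp (-π * t) ^ (8 * N + 1) / (1 - rexp (-π * t) ^ 8) := by
  have hq0 := exp_nonneg (-π * t)
  have hq1 := exp_neg_pi_mul_lt_one ht
  have hterm (k : ℕ) : ‖2 * cos (2 * π * a * (2 * k + 1)) * rexp (-π * (2 * k + 1) ^ 2 * t)‖ ≤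
      2 * rexp (-π * t) * (rexp (-π * t) ^ 8) ^ k := by
    refine (abs_two_mul_cos_mul_le _ (exp_nonneg _)).trans ?_
    have hexp := exp_neg_pi_mul_sq_mul (2 * k + 1) t
    push_cast at hexp
    rw [hexp, mul_assoc, ← pow_mul, ← pow_succ']
    gcongr 2 * ?_
    exact pow_le_pow_of_le_one hq0 hq1.le (by nlinarith [Nat.le_self_pow two_ne_zero k])
  have htail := norm_sub_le_of_geometric_bound_of_hasSum (pow_lt_one₀ hq0 hq1 (by norm_num)) hterm
    (hasSum_cosKernelOddPart a ht) N
  rwa [Real.norm_eq_abs, mul_assoc 2 (rexp _), ← pow_mul, ← pow_succ'] at htail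

lemma abs_mul_sub_mul_le (p p₀ q q₀ : ℝ) :
    |p * q - p₀ * q₀| ≤ |p - p₀| * |q| + |p₀| * |q - q₀| := by
  rw [← abs_mul, ← abs_mul]
  exact (congrArg abs (by ring)).trans_le (abs_add_le ((p - p₀) * q) (p₀ * (q - q₀)))

lemma abs_cosKernel_mul_cosKernel_sub_le (x y : ℝ) {t : ℝ} (ht : 0 < t)
    (hq : rexp (-π * t) ≤ 3 / 8) :
    |cosKernel (x : UnitAddCircle) (3 * t) * cosKernel (y : UnitAddCircle) t -
        (1 + 2 * rexp (-π * t) * cos (2 * π * y))| ≤ 5 * rexp (-π * t) ^ 3 := by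
  have hx := abs_one_add_sum_range_sub_cosKernel_le x (by positivity : 0 < 3 * t) 0
  have hy₀ := abs_one_add_sum_range_sub_cosKernel_le y ht 0
  have hy₁ := abs_one_add_sum_range_sub_cosKernel_le y ht 1
  rw [exp_neg_pi_mul_three_mul] at hx
  rw [abs_sub_comm] at hx hy₀ hy₁
  simp only [Finset.sum_range_zero, Finset.sum_range_one, add_zero, mul_zero, zero_add, mul_one,
    pow_one, Nat.cast_zero, one_pow] at hx hy₀ hy₁
  have hq0 := exp_pos (-π * t)
  have hmul := abs_mul_sub_mul_le (cosKernel (x : UnitAddCircle) (3 * t)) 1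
    (cosKernel (y : UnitAddCircle) t) (1 + 2 * cos (2 * π * y) * rexp (-π * t))
  rw [one_mul, abs_one, one_mul] at hmul
  set q := rexp (-π * t)
  have hq3 : q ^ 3 ≤ 1 / 18 := (pow_le_pow_left₀ hq0.le hq 3).trans (by norm_num)
  have hq9 : (q ^ 3) ^ 3 ≤ 1 / 1000 :=
    (pow_le_pow_left₀ (by positivity) hq3 3).trans (by norm_num)
  have hx' : |cosKernel (x : UnitAddCircle) (3 * t) - 1| ≤ 2.01 * q ^ 3 :=
    hx.trans <| (div_le_iff₀ (by linarith)).mpr (by nlinarith [pow_pos hq0 3])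
  have hy₀' : |cosKernel (y : UnitAddCircle) t - 1| ≤ 0.8 :=
    hy₀.trans <| (div_le_iff₀ (by linarith)).mpr (by linarith)
  have hy : |cosKernel (y : UnitAddCircle) t| ≤ 1.8 := by
    rw [abs_le] at hy₀' ⊢
    constructor <;> linarith
  have hy₁' : |cosKernel (y : UnitAddCircle) t - (1 + 2 * cos (2 * π * y) * q)| ≤ 0.8 * q ^ 3 :=
    hy₁.trans <| (div_le_iff₀ (by linarith)).mpr (by nlinarith [pow_pos hq0 3])
  calc _ ≤ _ := (congrArg abs (by ring)).trans_le hmul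
    _ ≤ 2.01 * q ^ 3 * 1.8 + 0.8 * q ^ 3 := by gcongr
    _ ≤ 5 * q ^ 3 := by linarith [pow_pos hq0 3]

lemma abs_cosKernelOddPart_le (a : ℝ) {t : ℝ} (ht : 0 < t) (hq : rexp (-π * t) ^ 8 ≤ 9 / 64) :
    |cosKernelOddPart a t| ≤ 2.33 * rexp (-π * t) := by
  have htail := abs_sum_range_sub_cosKernelOddPart_le a ht 0
  rw [abs_sub_comm, Finset.sum_range_zero, sub_zero, mul_zero, zero_add, pow_one] at htail
  exact htail.trans <| (div_le_iff₀ (by linarith)).mpr (by nlinarith [exp_pos (-π * t)])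

lemma abs_cosKernelOddPart_sub_le (a : ℝ) {t : ℝ} (ht : 0 < t)
    (hq : rexp (-π * t) ^ 8 ≤ 9 / 64) :
    |cosKernelOddPart a t - 2 * cos (2 * π * a) * rexp (-π * t)| ≤ 2.33 * rexp (-π * t) ^ 9 := by
  have htail := abs_sum_range_sub_cosKernelOddPart_le a ht 1
  rw [abs_sub_comm] at htail
  simp only [Finset.sum_range_one, Nat.cast_zero, mul_zero, zero_add, mul_one, one_pow] at htail
  exact htail.trans <| (div_le_iff₀ (by linarith)).mpr (by nlinarith [pow_pos (exp_pos (-π * t)) 9])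

lemma abs_cosKernelOddPart_mul_sub_le (x y : ℝ) {t : ℝ} (ht : 0 < t)
    (hq : rexp (-π * t) ^ 4 ≤ 3 / 8) :
    |cosKernelOddPart x (3 * t) * cosKernelOddPart y t -
        4 * rexp (-π * t) ^ 4 * cos (2 * π * x) * cos (2 * π * y)| ≤
      5 * (rexp (-π * t) ^ 4) ^ 3 := by
  have hq₈ : rexp (-π * t) ^ 8 ≤ 9 / 64 := calc
    rexp (-π * t) ^ 8 = (rexp (-π * t) ^ 4) ^ 2 := by ring
    _ ≤ (3 / 8) ^ 2 := by gcongr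
    _ = 9 / 64 := by norm_num
  have hq₂₄ : rexp (-π * (3 * t)) ^ 8 ≤ 9 / 64 := calc
    rexp (-π * (3 * t)) ^ 8 = (rexp (-π * t) ^ 8) ^ 3 := by
      rw [exp_neg_pi_mul_three_mul]
      ring
    _ ≤ (9 / 64) ^ 3 := by gcongr
    _ ≤ 9 / 64 := by norm_num
  have hx := abs_cosKernelOddPart_sub_le x (by positivity : 0 < 3 * t) hq₂₄
  have hcos := abs_two_mul_cos_mul_le (2 * π * x) (exp_nonneg (-π * (3 * t)))
  have hy := abs_cosKernelOddPart_le y ht hq₈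
  have hy' := abs_cosKernelOddPart_sub_le y ht hq₈
  have hmul := abs_mul_sub_mul_le (cosKernelOddPart x (3 * t))
    (2 * cos (2 * π * x) * rexp (-π * (3 * t)))
    (cosKernelOddPart y t) (2 * cos (2 * π * y) * rexp (-π * t))
  rw [exp_neg_pi_mul_three_mul] at hx hcos hmul
  set q := rexp (-π * t)
  have hq₁₆ : q ^ 16 ≤ 1 / 50 := calc
    q ^ 16 = (q ^ 8) ^ 2 := by ring
    _ ≤ (9 / 64) ^ 2 := by gcongr
    _ ≤ 1 / 50 := by norm_num
  calc _ ≤ _ := (congrArg abs (by ring)).trans_le hmul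
    _ ≤ 2.33 * (q ^ 3) ^ 9 * (2.33 * q) + 2 * q ^ 3 * (2.33 * q ^ 9) := by gcongr
    _ = (5.4289 * q ^ 16 + 4.66) * (q ^ 4) ^ 3 := by ring
    _ ≤ 5 * (q ^ 4) ^ 3 := by gcongr; linarith

lemma exp_le_evenKernel (a : ℝ) {t : ℝ} (ht : 0 < t) (n : ℤ) :
    rexp (-π * (n + a) ^ 2 * t) ≤ evenKernel (a : UnitAddCircle) t :=
  le_hasSum (hasSum_int_evenKernel a ht) n fun _ _ ↦ exp_nonneg _

lemma evenKernel_pos (a : ℝ) {t : ℝ} (ht : 0 < t) : 0 < evenKernel (a : UnitAddCircle) t :=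
  (exp_pos _).trans_le (exp_le_evenKernel a ht 0)

lemma evenKernel_le {a t : ℝ} (ha₀ : 0 ≤ a) (ha₁ : a ≤ 1) (ht : 0 < t) :
    evenKernel (a : UnitAddCircle) t ≤
      (rexp (-π * a ^ 2 * t) + rexp (-π * (1 - a) ^ 2 * t)) / (1 - rexp (-π * t)) := by
  have hpt : 0 < π * t := mul_pos pi_pos ht
  have hgeom := hasSum_geometric_of_lt_one (exp_nonneg (-π * t)) (exp_neg_pi_mul_lt_one ht)
  have hmajorant := (hgeom.mul_left (rexp (-π * a ^ 2 * t))).int_rec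
    (hgeom.mul_left (rexp (-π * (1 - a) ^ 2 * t)))
  rw [← add_mul, ← div_eq_mul_inv] at hmajorant
  refine hasSum_le (fun n ↦ ?_) (hasSum_int_evenKernel a ht) hmajorant
  -- `(k + c)² ≥ c² + k` for naturals `k` and `c ≥ 0`, applied with `c = a` and `c = 1 - a`
  have hterm (k : ℕ) {c : ℝ} (hc : 0 ≤ c) :
      rexp (-π * (k + c) ^ 2 * t) ≤ rexp (-π * c ^ 2 * t) * rexp (-π * t) ^ k := by
    rw [← Real.exp_nat_mul, ← Real.exp_add, Real.exp_le_exp]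
    have hk : (k : ℝ) ≤ (k : ℝ) ^ 2 := mod_cast Nat.le_self_pow two_ne_zero k
    nlinarith [mul_nonneg hc k.cast_nonneg]
  cases n with
  | ofNat k => exact hterm k ha₀
  | negSucc k =>
    have hsq : ((Int.negSucc k : ℤ) + a) ^ 2 = (k + (1 - a)) ^ 2 := by
      rw [Int.cast_negSucc]
      push_cast
      ring
    rw [hsq]
    exact hterm k (sub_nonneg.mpr ha₁)

lemma exp_le_evenKernel_mul_evenKernel {t x y : ℝ} (ht : 0 < t) {m n : ℤ}
    (h : (m + x) ^ 2 + 3 * (n + y) ^ 2 ≤ 1 / 3) :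
    rexp (-π * t / 3) ≤
      evenKernel (x : UnitAddCircle) t * evenKernel (y : UnitAddCircle) (3 * t) := by
  have ht₃ : 0 < 3 * t := by positivity
  calc
    rexp (-π * t / 3) ≤ rexp (-π * (m + x) ^ 2 * t) * rexp (-π * (n + y) ^ 2 * (3 * t)) := by
      rw [← Real.exp_add, Real.exp_le_exp]
      nlinarith [mul_pos pi_pos ht]
    _ ≤ _ := mul_le_mul (exp_le_evenKernel x ht m) (exp_le_evenKernel y ht₃ n) (exp_nonneg _)
      (evenKernel_pos x ht).le

lemma exp_neg_pi_mul_div_three_pow (t : ℝ) (k : ℕ) :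
    rexp (-π * t / 3) ^ k = rexp (-π * (k / 3) * t) := by
  rw [← Real.exp_nat_mul]
  congr 1
  ring

lemma evenKernel_half_mul_evenKernel_one_sixth_le {t : ℝ} (ht : 0 < t) :
    evenKernel ((1 / 2 : ℝ) : UnitAddCircle) t * evenKernel ((1 / 6 : ℝ) : UnitAddCircle) (3 * t) ≤
      2 * rexp (-π * t / 3) * (1 + rexp (-π * t / 3) ^ 6) /
        ((1 - rexp (-π * t / 3) ^ 3) * (1 - rexp (-π * t / 3) ^ 9)) := by
  have ht₃ : 0 < 3 * t := by positivity
  have hx : evenKernel ((1 / 2 : ℝ) : UnitAddCircle) t ≤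
      2 * rexp (-π * (1 / 2) ^ 2 * t) / (1 - rexp (-π * t / 3) ^ 3) := by
    convert evenKernel_le (a := 1 / 2) (by norm_num) (by norm_num) ht using 2
    · ring_nf
    · rw [exp_neg_pi_mul_div_three_pow]
      ring_nf
  have hy : evenKernel ((1 / 6 : ℝ) : UnitAddCircle) (3 * t) ≤
      rexp (-π * (1 / 6) ^ 2 * (3 * t)) * (1 + rexp (-π * t / 3) ^ 6) /
        (1 - rexp (-π * t / 3) ^ 9) := by
    convert evenKernel_le (a := 1 / 6) (by norm_num) (by norm_num) ht₃ using 2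
    · rw [mul_add, mul_one, exp_neg_pi_mul_div_three_pow, ← Real.exp_add]
      ring_nf
    · rw [exp_neg_pi_mul_div_three_pow]
      ring_nf
  have hprod : rexp (-π * t / 3) =
      rexp (-π * (1 / 2) ^ 2 * t) * rexp (-π * (1 / 6) ^ 2 * (3 * t)) := by
    rw [← Real.exp_add]
    ring_nf
  refine (mul_le_mul hx hy (evenKernel_pos _ ht₃).le
    ((evenKernel_pos _ ht).le.trans hx)).trans_eq ?_
  rw [div_mul_div_comm]
  congr 1
  nth_rw 2 [hprod]
  ring

lemma evenKernel_one_mul_evenKernel_two_thirds_le {t : ℝ} (ht : 0 < t) :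
    evenKernel ((1 : ℝ) : UnitAddCircle) t * evenKernel ((2 / 3 : ℝ) : UnitAddCircle) (3 * t) ≤
      rexp (-π * t / 3) * (1 + rexp (-π * t / 3) ^ 3) ^ 2 /
        ((1 - rexp (-π * t / 3) ^ 3) * (1 - rexp (-π * t / 3) ^ 9)) := by
  have ht₃ : 0 < 3 * t := by positivity
  have hx : evenKernel ((1 : ℝ) : UnitAddCircle) t ≤
      (1 + rexp (-π * t / 3) ^ 3) / (1 - rexp (-π * t / 3) ^ 3) := by
    convert evenKernel_le (a := 1) (by norm_num) (by norm_num) ht using 2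
    · rw [exp_neg_pi_mul_div_three_pow]
      norm_num [add_comm]
    · rw [exp_neg_pi_mul_div_three_pow]
      ring_nf
  have hy : evenKernel ((2 / 3 : ℝ) : UnitAddCircle) (3 * t) ≤
      rexp (-π * t / 3) * (1 + rexp (-π * t / 3) ^ 3) / (1 - rexp (-π * t / 3) ^ 9) := by
    convert evenKernel_le (a := 2 / 3) (by norm_num) (by norm_num) ht₃ using 2
    · rw [mul_add, mul_one, ← pow_succ', exp_neg_pi_mul_div_three_pow]
      ring_nf
    · rw [exp_neg_pi_mul_div_three_pow]
      ring_nf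
  refine (mul_le_mul hx hy (evenKernel_pos _ ht₃).le
    ((evenKernel_pos _ ht).le.trans hx)).trans_eq ?_
  rw [div_mul_div_comm]
  ring

/-- The Gaussian sum `∑ exp (-π (s (m + x)² + t (n + y)²))` over the centred rectangular lattice
`ℤ² ∪ (ℤ² + (1/2, 1/2))`, expressed through one-dimensional theta kernels. -/
noncomputable def centeredRectTheta (s t x y : ℝ) : ℝ :=
  evenKernel (x : UnitAddCircle) s * evenKernel (y : UnitAddCircle) t +
    evenKernel ((x + 1 / 2 : ℝ) : UnitAddCircle) s * evenKernel ((y + 1 / 2 : ℝ) : UnitAddCircle) t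

lemma evenKernel_add_half_add_half (a t : ℝ) :
    evenKernel ((a + 1 / 2 + 1 / 2 : ℝ) : UnitAddCircle) t = evenKernel (a : UnitAddCircle) t := by
  rw [add_assoc, add_halves, AddCircle.coe_add_period]

lemma centeredRectTheta_add_half (s t x y : ℝ) :
    centeredRectTheta s t (x + 1 / 2) (y + 1 / 2) = centeredRectTheta s t x y := by
  simp only [centeredRectTheta, evenKernel_add_half_add_half]
  exact add_comm _ _

lemma centeredRectTheta_neg_right (s t x y : ℝ) :
    centeredRectTheta s t x (-y) = centeredRectTheta s t x y := by
  have hy : -y + 1 / 2 = -(y + 1 / 2) + 1 / 2 + 1 / 2 := by ring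
  simp only [centeredRectTheta]
  rw [hy, evenKernel_add_half_add_half]
  simp only [AddCircle.coe_neg, evenKernel_neg]

lemma hasSum_exp_mul_exp_evenKernel {s t : ℝ} (hs : 0 < s) (ht : 0 < t) (x y : ℝ) :
    HasSum (fun p : ℤ × ℤ ↦ rexp (-π * (p.1 + x) ^ 2 * s) * rexp (-π * (p.2 + y) ^ 2 * t))
      (evenKernel (x : UnitAddCircle) s * evenKernel (y : UnitAddCircle) t) := by
  have hx := hasSum_int_evenKernel x hs
  have hy := hasSum_int_evenKernel y ht
  exact hx.mul hy <| hx.summable.mul_of_nonneg hy.summable (fun _ ↦ exp_nonneg _)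
    fun _ ↦ exp_nonneg _

-- Poisson summation; the odd frequencies of the two factors pair up only with each other because
-- translation by `(1/2, 1/2)` changes the sign of exactly the mixed products.
lemma sqrt_mul_centeredRectTheta {s t : ℝ} (hs : 0 < s) (ht : 0 < t) (x y : ℝ) :
    √(s * t) / 2 * centeredRectTheta s t x y =
      cosKernel ((2 * x : ℝ) : UnitAddCircle) (4 * (1 / s)) *
          cosKernel ((2 * y : ℝ) : UnitAddCircle) (4 * (1 / t)) +
        cosKernelOddPart x (1 / s) * cosKernelOddPart y (1 / t) := by
  simp only [centeredRectTheta, evenKernel_functional_equation _ s,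
    evenKernel_functional_equation _ t, ← sqrt_eq_rpow]
  rw [cosKernel_eq_add_oddPart x (one_div_pos.mpr hs),
    cosKernel_eq_add_oddPart y (one_div_pos.mpr ht),
    cosKernel_add_half_eq_sub_oddPart x (one_div_pos.mpr hs),
    cosKernel_add_half_eq_sub_oddPart y (one_div_pos.mpr ht), sqrt_mul hs.le]
  field_simp
  ring

end ThetaKernels

section HexTheta

/-- The Gaussian sum `∑ exp (-π b ‖l - z‖²)` over the hexagonal lattice, where `z` has rectangular
coordinates `(x, y)`; see `gaussianSum_hexLattice`. -/
noncomputable def hexTheta (b x y : ℝ) : ℝ :=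
  centeredRectTheta (2 * b / √3) (3 * (2 * b / √3)) x y

/-- The value `exp (-π ‖m‖² / b)` at the shortest nonzero vectors `m` of the dual of the hexagonal
lattice, which have `‖m‖² = 2 / √3`. -/
noncomputable def dualShellWeight (b : ℝ) : ℝ := rexp (-(2 * π / (√3 * b)))

/-- The value `exp (-π b ‖z₀‖²)` at the deep hole `z₀` of the hexagonal lattice, for which
`‖z₀‖² = 2 / (3 √3)`. -/
noncomputable def deepHoleWeight (b : ℝ) : ℝ := rexp (-(2 * π * b / (3 * √3)))

lemma dualShellWeight_pos (b : ℝ) : 0 < dualShellWeight b := exp_pos _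

lemma deepHoleWeight_pos (b : ℝ) : 0 < deepHoleWeight b := exp_pos _

lemma dualShellWeight_two_mul_sq (b : ℝ) : dualShellWeight (2 * b) ^ 2 = dualShellWeight b := by
  rw [dualShellWeight, dualShellWeight, ← Real.exp_nat_mul]
  congr 1
  push_cast
  field_simp

lemma deepHoleWeight_two_mul (b : ℝ) : deepHoleWeight (2 * b) = deepHoleWeight b ^ 2 := by
  rw [deepHoleWeight, deepHoleWeight, ← Real.exp_nat_mul]
  congr 1
  push_cast
  ring

-- `2 z₀` is congruent to `-z₀` modulo the lattice, and `Θ` is even.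
lemma hexTheta_two_mul_deepHole (b : ℝ) : hexTheta b 1 (1 / 3) = hexTheta b (1 / 2) (1 / 6) := by
  have h := centeredRectTheta_add_half (2 * b / √3) (3 * (2 * b / √3)) (1 / 2) (-(1 / 6))
  rw [centeredRectTheta_neg_right] at h
  convert h using 2 <;> norm_num [hexTheta]

lemma abs_mul_hexTheta_sub_le {b : ℝ} (hb : 0 < b) (hU : dualShellWeight b ≤ 3 / 8) (x y : ℝ) :
    |b * hexTheta b x y - (1 + 2 * dualShellWeight b * cos (2 * π * (2 * y)) +
        4 * dualShellWeight b * cos (2 * π * x) * cos (2 * π * y))| ≤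
      10 * dualShellWeight b ^ 3 := by
  set s := 2 * b / √3 with hs_def
  set τ := 1 / (3 * s) with hτ_def
  have hs : 0 < s := by positivity
  have hτ : 0 < τ := by positivity
  have hweight : dualShellWeight b = rexp (-π * (4 * τ)) := by
    rw [dualShellWeight, hτ_def, hs_def]
    congr 1
    field_simp
    norm_num
  have hweight' : rexp (-π * (4 * τ)) = rexp (-π * τ) ^ 4 := by
    rw [← Real.exp_nat_mul]
    congr 1
    push_cast
    ring
  have hcovolume : √(s * (3 * s)) / 2 = b := by
    rw [show s * (3 * s) = (2 * b) ^ 2 by rw [hs_def]; field_simp; norm_num,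
      sqrt_sq (by positivity), mul_div_cancel_left₀ b two_ne_zero]
  have hpoisson := sqrt_mul_centeredRectTheta hs (by positivity : 0 < 3 * s) x y
  rw [hcovolume, show 4 * (1 / s) = 3 * (4 * τ) by rw [hτ_def]; field_simp,
    show 1 / s = 3 * τ by rw [hτ_def]; field_simp] at hpoisson
  rw [hweight] at hU ⊢
  have heven := abs_cosKernel_mul_cosKernel_sub_le (2 * x) (2 * y) (by positivity : 0 < 4 * τ) hU
  have hodd := abs_cosKernelOddPart_mul_sub_le x y hτ (hweight' ▸ hU)
  rw [← hweight'] at hodd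
  rw [hexTheta, hpoisson, add_sub_add_comm]
  exact (abs_add_le _ _).trans (by linarith)

lemma le_mul_hexTheta {b : ℝ} (hb : 0 < b) (hU : dualShellWeight b ≤ 3 / 8) (x y : ℝ) :
    1 - 3 * dualShellWeight b - 10 * dualShellWeight b ^ 3 ≤ b * hexTheta b x y := by
  have happrox := (abs_le.mp (abs_mul_hexTheta_sub_le hb hU x y)).1
  have hshell : -3 ≤ 2 * cos (2 * π * (2 * y)) + 4 * cos (2 * π * x) * cos (2 * π * y) := by
    rw [mul_left_comm, cos_two_mul]
    nlinarith [sq_nonneg (2 * cos (2 * π * y) + cos (2 * π * x)), cos_sq_le_one (2 * π * x)]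
  linarith [mul_le_mul_of_nonneg_left hshell (dualShellWeight_pos b).le]

lemma mul_hexTheta_deepHole_le {b : ℝ} (hb : 0 < b) (hU : dualShellWeight b ≤ 3 / 8) :
    b * hexTheta b (1 / 2) (1 / 6) ≤ 1 - 3 * dualShellWeight b + 10 * dualShellWeight b ^ 3 := by
  have happrox := (abs_le.mp (abs_mul_hexTheta_sub_le hb hU (1 / 2) (1 / 6))).2
  rw [show 2 * π * (2 * (1 / 6)) = 2 * (π / 3) by ring, show 2 * π * (1 / 2) = π by ring,
    show 2 * π * (1 / 6) = π / 3 by ring, cos_two_mul, cos_pi, cos_pi_div_three] at happrox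
  linarith

lemma exists_int_abs_add_eq (x : ℝ) :
    ∃ m n : ℤ, |m + x| ≤ 1 / 2 ∧ |n + (x + 1 / 2)| = 1 / 2 - |m + x| := by
  have hround := abs_sub_round x
  have hcomm : ((-round x : ℤ) : ℝ) + x = x - round x := by
    push_cast
    ring
  rcases le_total 0 (x - round x) with h | h
  · refine ⟨-round x, -round x - 1, hcomm ▸ hround, ?_⟩
    rw [hcomm, abs_of_nonneg h, abs_of_nonpos] <;> push_cast <;> linarith [abs_le.mp hround]
  · refine ⟨-round x, -round x, hcomm ▸ hround, ?_⟩
    rw [hcomm, abs_of_nonpos h, abs_of_nonneg] <;> push_cast <;> linarith [abs_le.mp hround]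

-- The left-hand side is convex in `(u, v)`, and equals `1 / 3` at the vertices `(1/2, 1/6)` and
-- `(0, 1/3)` of the region.
lemma sq_add_three_mul_sq_le {u v : ℝ} (hu₀ : 0 ≤ u) (hu : u ≤ 1 / 2) (hv : 0 ≤ v)
    (huv : u + 3 * v ≤ 1) : u ^ 2 + 3 * v ^ 2 ≤ 1 / 3 := by
  have hv₂ : v ^ 2 ≤ ((1 - u) / 3) ^ 2 := by
    gcongr
    linarith
  nlinarith

-- Up to the scaling by `2 / √3`, this is the bound on the covering radius of the hexagonal lattice.
lemma exists_int_sq_add_three_mul_sq_le (x y : ℝ) :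
    (∃ m n : ℤ, (m + x) ^ 2 + 3 * (n + y) ^ 2 ≤ 1 / 3) ∨
      ∃ m n : ℤ, (m + (x + 1 / 2)) ^ 2 + 3 * (n + (y + 1 / 2)) ^ 2 ≤ 1 / 3 := by
  obtain ⟨m, m', hm, hm'⟩ := exists_int_abs_add_eq x
  obtain ⟨n, n', hn, hn'⟩ := exists_int_abs_add_eq y
  have hm₀ := abs_nonneg (m + x)
  have hn₀ := abs_nonneg (n + y)
  rcases le_total (|m + x| + 3 * |n + y|) 1 with h | h
  · refine .inl ⟨m, n, ?_⟩
    rw [← sq_abs (m + x), ← sq_abs (n + y)]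
    exact sq_add_three_mul_sq_le hm₀ hm hn₀ h
  · refine .inr ⟨m', n', ?_⟩
    rw [← sq_abs (m' + (x + 1 / 2)), ← sq_abs (n' + (y + 1 / 2)), hm', hn']
    apply sq_add_three_mul_sq_le <;> linarith

lemma deepHoleWeight_eq (b : ℝ) : deepHoleWeight b = rexp (-π * (2 * b / √3) / 3) := by
  rw [deepHoleWeight]
  congr 1
  field_simp

lemma deepHoleWeight_le_hexTheta {b : ℝ} (hb : 0 < b) (x y : ℝ) :
    deepHoleWeight b ≤ hexTheta b x y := by
  have hs : 0 < 2 * b / √3 := by positivity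
  have hs₃ : 0 < 3 * (2 * b / √3) := by positivity
  rw [deepHoleWeight_eq, hexTheta, centeredRectTheta]
  rcases exists_int_sq_add_three_mul_sq_le x y with ⟨m, n, h⟩ | ⟨m, n, h⟩
  · exact le_add_of_le_of_nonneg (exp_le_evenKernel_mul_evenKernel hs h)
      (mul_pos (evenKernel_pos _ hs) (evenKernel_pos _ hs₃)).le
  · exact le_add_of_nonneg_of_le (mul_pos (evenKernel_pos _ hs) (evenKernel_pos _ hs₃)).le
      (exp_le_evenKernel_mul_evenKernel hs h)

lemma hexTheta_deepHole_le {b : ℝ} (hb : 0 < b) :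
    hexTheta b (1 / 2) (1 / 6) ≤
      deepHoleWeight b * (2 * (1 + deepHoleWeight b ^ 6) + (1 + deepHoleWeight b ^ 3) ^ 2) /
        ((1 - deepHoleWeight b ^ 3) * (1 - deepHoleWeight b ^ 9)) := by
  have hs : 0 < 2 * b / √3 := by positivity
  rw [deepHoleWeight_eq, hexTheta, centeredRectTheta, show (1 / 2 + 1 / 2 : ℝ) = 1 by norm_num,
    show (1 / 6 + 1 / 2 : ℝ) = 2 / 3 by norm_num]
  refine (add_le_add (evenKernel_half_mul_evenKernel_one_sixth_le hs)
    (evenKernel_one_mul_evenKernel_two_thirds_le hs)).trans_eq ?_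
  rw [← add_div]
  ring

lemma exists_lt_forall_le_hexTheta_of_le {b : ℝ} (hb : 0 < b) (hb' : b ≤ 7 / 4) :
    ∃ L, 2 * hexTheta (2 * b) (1 / 2) (1 / 6) < L ∧ ∀ x y, L ≤ hexTheta b x y := by
  have hu₀ := dualShellWeight_pos (2 * b)
  have hu : dualShellWeight (2 * b) ≤ 3 / 8 := by
    have hexponent : -(2 * π / (√3 * (2 * b))) ≤ -1 := by
      have hsqrt : √3 ≤ 1.7321 := Real.sqrt_le_iff.mpr (by norm_num)
      rw [neg_le_neg_iff, one_le_div (by positivity)]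
      nlinarith [pi_gt_d2]
    refine (Real.exp_le_exp.mpr hexponent).trans ?_
    linarith [exp_neg_one_lt_d9]
  have hu' : dualShellWeight b ≤ 3 / 8 := by
    rw [← dualShellWeight_two_mul_sq]
    nlinarith
  refine ⟨(1 - 3 * dualShellWeight b - 10 * dualShellWeight b ^ 3) / b, ?_, fun x y ↦ ?_⟩
  · rw [lt_div_iff₀' hb, ← dualShellWeight_two_mul_sq]
    have hhole := mul_hexTheta_deepHole_le (by positivity : 0 < 2 * b) hu
    set u := dualShellWeight (2 * b)
    have hgap : 0 < 3 - 3 * u - 10 * u ^ 2 - 10 * u ^ 5 := by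
      have hu₂ : u ^ 2 ≤ (3 / 8) ^ 2 := by gcongr
      have hu₅ : u ^ 5 ≤ (3 / 8) ^ 5 := by gcongr
      linarith
    linarith [mul_pos hu₀ hgap]
  · rw [div_le_iff₀' hb]
    exact le_mul_hexTheta hb hu' x y

lemma exists_lt_forall_le_hexTheta_of_ge {b : ℝ} (hb : 7 / 4 ≤ b) :
    ∃ L, 2 * hexTheta (2 * b) (1 / 2) (1 / 6) < L ∧ ∀ x y, L ≤ hexTheta b x y := by
  have hb₀ : 0 < b := by linarith
  have hv₀ := deepHoleWeight_pos b
  have hv : deepHoleWeight b ≤ 1 / 7 := by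
    have hexponent : -(2 * π * b / (3 * √3)) ≤ -2 := by
      have hsqrt : √3 ≤ 1.7321 := Real.sqrt_le_iff.mpr (by norm_num)
      rw [neg_le_neg_iff, le_div_iff₀ (by positivity)]
      nlinarith [pi_gt_d2]
    calc
      deepHoleWeight b ≤ rexp (-2) := Real.exp_le_exp.mpr hexponent
      _ = rexp (-1) ^ 2 := by
        rw [← Real.exp_nat_mul]
        norm_num
      _ ≤ 0.37 ^ 2 := by
        gcongr
        linarith [exp_neg_one_lt_d9]
      _ ≤ 1 / 7 := by norm_num
  refine ⟨deepHoleWeight b, ?_, deepHoleWeight_le_hexTheta hb₀⟩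
  have hhole := hexTheta_deepHole_le (by positivity : 0 < 2 * b)
  rw [deepHoleWeight_two_mul] at hhole
  set v := deepHoleWeight b
  have hv₂ : v ^ 2 ≤ 1 / 49 := (pow_le_pow_left₀ hv₀.le hv 2).trans (by norm_num)
  have hw {k : ℕ} (hk : 1 ≤ k) : (v ^ 2) ^ k ≤ 1 / 49 :=
    (pow_le_of_le_one (by positivity) (by linarith) (by lia)).trans hv₂
  have hnum : 2 * (1 + (v ^ 2) ^ 6) + (1 + (v ^ 2) ^ 3) ^ 2 ≤ 3.1 := by
    nlinarith [hw (k := 6) (by norm_num), hw (k := 3) (by norm_num), pow_pos hv₀ 6]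
  have hden : 0.95 ≤ (1 - (v ^ 2) ^ 3) * (1 - (v ^ 2) ^ 9) := by
    nlinarith [hw (k := 3) (by norm_num), hw (k := 9) (by norm_num), pow_pos hv₀ 6, pow_pos hv₀ 18]
  calc
    2 * hexTheta (2 * b) (1 / 2) (1 / 6) ≤ 2 * (v ^ 2 * 3.3) := by
      rw [mul_div_assoc] at hhole
      refine mul_le_mul_of_nonneg_left (hhole.trans ?_) zero_le_two
      gcongr
      exact (div_le_iff₀ (by linarith)).mpr (by linarith)
    _ = 6.6 * v * v := by ring
    _ ≤ 6.6 * v * (1 / 7) := by gcongr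
    _ < v := by linarith

lemma exists_lt_forall_le_hexTheta {b : ℝ} (hb : 0 < b) :
    ∃ L, 2 * hexTheta (2 * b) (1 / 2) (1 / 6) < L ∧ ∀ x y, L ≤ hexTheta b x y :=
  (le_total b (7 / 4)).elim (exists_lt_forall_le_hexTheta_of_le hb)
    exists_lt_forall_le_hexTheta_of_ge

end HexTheta

section GaussianPolarization

variable {E : Type*} [SeminormedAddCommGroup E]

/-- The Gaussian sum `∑ exp (-π b ‖a - z‖²)` over the points `a` of a set `A`, as a function of the
base point `z`. Its value is the junk value `0` when the family is not summable. -/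
noncomputable def gaussianSum (A : Set E) (b : ℝ) (z : E) : ℝ :=
  ∑' a : A, rexp (-(π * b) * ‖(a : E) - z‖ ^ 2)

/-- The Gaussian polarization of a set `A`: the infimum of its Gaussian sum over all base points. -/
noncomputable def gaussianPolarization (A : Set E) (b : ℝ) : ℝ := ⨅ z, gaussianSum A b z

lemma gaussianPolarization_le_gaussianSum (A : Set E) (b : ℝ) (z : E) :
    gaussianPolarization A b ≤ gaussianSum A b z :=
  ciInf_le ⟨0, Set.forall_mem_range.mpr fun _ ↦ tsum_nonneg fun _ ↦ exp_nonneg _⟩ z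

lemma gaussianSum_image_add_right (A : Set E) (b : ℝ) (v z : E) :
    gaussianSum ((fun p ↦ p + v) '' A) b z = gaussianSum A b (z - v) := by
  rw [gaussianSum, tsum_image (fun p ↦ rexp (-(π * b) * ‖p - z‖ ^ 2)) (add_left_injective v).injOn]
  simp only [gaussianSum, sub_sub_eq_add_sub]

variable [NormedSpace ℝ E]

lemma norm_smul_sub_smul_sq (c : ℝ) (p z : E) : ‖c • p - c • z‖ ^ 2 = c ^ 2 * ‖p - z‖ ^ 2 := by
  rw [← smul_sub, norm_smul, mul_pow, Real.norm_eq_abs, sq_abs]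

lemma gaussianSum_image_smul (A : Set E) (b : ℝ) {c : ℝ} (hc : c ≠ 0) (z : E) :
    gaussianSum ((fun p ↦ c • p) '' A) b (c • z) = gaussianSum A (b * c ^ 2) z := by
  rw [gaussianSum, tsum_image (fun p ↦ rexp (-(π * b) * ‖p - c • z‖ ^ 2))
    (smul_right_injective E hc).injOn]
  simp only [gaussianSum, norm_smul_sub_smul_sq, ← mul_assoc, neg_mul]

lemma iInf_tsum_exp_norm_smul_sub (A : Set E) (b : ℝ) {c : ℝ} (hc : c ≠ 0) :
    ⨅ z : E, ∑' a : A, rexp (-(π * b) * ‖c • (a : E) - z‖ ^ 2) =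
      gaussianPolarization A (b * c ^ 2) := by
  refine ((Equiv.smulRight hc).iInf_congr fun z ↦ ?_).symm
  rw [Equiv.smulRight_apply, gaussianSum]
  simp only [norm_smul_sub_smul_sq, ← mul_assoc, neg_mul]

end GaussianPolarization

section HexLattice

/-- The point of the plane with rectangular coordinates `(x, y)` relative to the orthogonal basis of
the sublattice of index 2 of `hexLattice` spanned by `√(2/√3) (1, 0)` and `√(2/√3) (0, √3)`. -/
noncomputable def hexPoint (x y : ℝ) : EuclideanSpace ℝ (Fin 2) := √(2 / √3) • vec2 x (√3 * y)

lemma hexPoint_add (x y x' y' : ℝ) :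
    hexPoint x y + hexPoint x' y' = hexPoint (x + x') (y + y') := by
  ext i
  fin_cases i <;> simp [hexPoint, vec2] <;> ring

lemma hexPoint_sub (x y x' y' : ℝ) :
    hexPoint x y - hexPoint x' y' = hexPoint (x - x') (y - y') := by
  ext i
  fin_cases i <;> simp [hexPoint, vec2] <;> ring

lemma norm_hexPoint_sq (x y : ℝ) : ‖hexPoint x y‖ ^ 2 = 2 / √3 * (x ^ 2 + 3 * y ^ 2) := by
  rw [hexPoint, norm_smul, mul_pow, EuclideanSpace.norm_sq_eq, Real.norm_eq_abs, sq_abs,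
    sq_sqrt (by positivity)]
  simp [vec2, Fin.sum_univ_two, mul_pow, sq_abs]

lemma hexPoint_inj {x y x' y' : ℝ} : hexPoint x y = hexPoint x' y' ↔ x = x' ∧ y = y' := by
  simp [hexPoint, vec2]

lemma exists_hexPoint_eq (z : EuclideanSpace ℝ (Fin 2)) : ∃ x y, hexPoint x y = z := by
  refine ⟨z 0 / √(2 / √3), z 1 / (√(2 / √3) * √3), ?_⟩
  ext i
  fin_cases i <;> simp [hexPoint, vec2] <;> field_simp

lemma deepHole_eq_hexPoint : deepHole = hexPoint (1 / 2) (1 / 6) := by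
  rw [deepHole, hexPoint]
  congr 2
  field_simp
  norm_num

/-- The hexagonal lattice as a rectangular lattice together with its translate by the centre of the
rectangle. The coordinates are negated so that `a - hexPoint x y` becomes, up to sign, a point of
the form `hexPoint (m + x) (n + y)`, as in the theta kernels. -/
noncomputable def hexLatticeParam : (ℤ × ℤ) ⊕ (ℤ × ℤ) → EuclideanSpace ℝ (Fin 2)
  | .inl p => hexPoint (-p.1) (-p.2)
  | .inr p => hexPoint (-(p.1 + 1 / 2)) (-(p.2 + 1 / 2))

lemma intCast_ne_intCast_add_half (m n : ℤ) : (m : ℝ) ≠ n + 1 / 2 := fun h ↦ by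
  have : 2 * m = 2 * n + 1 := mod_cast (by linarith : (2 * m : ℝ) = 2 * n + 1)
  lia

lemma hexLatticeParam_injective : Function.Injective hexLatticeParam := by
  rintro (⟨m, n⟩ | ⟨m, n⟩) (⟨m', n'⟩ | ⟨m', n'⟩) h <;>
    obtain ⟨hm, hn⟩ := hexPoint_inj.mp h
  · simpa using And.intro hm hn
  · exact (intCast_ne_intCast_add_half _ _ (neg_injective hm)).elim
  · exact (intCast_ne_intCast_add_half _ _ (neg_injective hm).symm).elim
  · simpa using And.intro hm hn

lemma mem_hexLattice_iff {p : EuclideanSpace ℝ (Fin 2)} :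
    p ∈ hexLattice ↔ ∃ k l : ℤ, p = hexPoint (k + l / 2) (l / 2) := by
  have hcoord (l : ℤ) : (l : ℝ) * (√3 / 2) = √3 * (l / 2) := by ring
  simp only [hexLattice, hcoord]
  rfl

lemma range_hexLatticeParam : Set.range hexLatticeParam = hexLattice := by
  ext p
  rw [mem_hexLattice_iff]
  constructor
  · rintro ⟨⟨m, n⟩ | ⟨m, n⟩, rfl⟩
    · refine ⟨n - m, -2 * n, hexPoint_inj.mpr ⟨?_, ?_⟩⟩ <;> push_cast <;> ring
    · refine ⟨n - m, -2 * n - 1, hexPoint_inj.mpr ⟨?_, ?_⟩⟩ <;> push_cast <;> ring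
  · rintro ⟨k, l, rfl⟩
    obtain ⟨n, rfl | rfl⟩ := l.even_or_odd'
    · refine ⟨.inl (-k - n, -n), hexPoint_inj.mpr ⟨?_, ?_⟩⟩ <;> push_cast <;> ring
    · refine ⟨.inr (-k - n - 1, -n - 1), hexPoint_inj.mpr ⟨?_, ?_⟩⟩ <;> push_cast <;> ring

lemma exp_norm_hexPoint_sub_hexPoint (b m n x y : ℝ) :
    rexp (-(π * b) * ‖hexPoint (-m) (-n) - hexPoint x y‖ ^ 2) =
      rexp (-π * (m + x) ^ 2 * (2 * b / √3)) * rexp (-π * (n + y) ^ 2 * (3 * (2 * b / √3))) := by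
  rw [hexPoint_sub, norm_hexPoint_sq, ← Real.exp_add]
  ring_nf

lemma hasSum_hexLattice {b : ℝ} (hb : 0 < b) (x y : ℝ) :
    HasSum (fun l : hexLattice ↦ rexp (-(π * b) * ‖(l : EuclideanSpace ℝ (Fin 2)) -
      hexPoint x y‖ ^ 2)) (hexTheta b x y) := by
  rw [← range_hexLatticeParam]
  refine (Equiv.ofInjective _ hexLatticeParam_injective).hasSum_iff.mp (.sum ?_ ?_)
  all_goals simp only [Function.comp_def, Equiv.ofInjective_apply, hexLatticeParam,
    exp_norm_hexPoint_sub_hexPoint]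
  · exact hasSum_exp_mul_exp_evenKernel (by positivity) (by positivity) x y
  · simp only [add_assoc, add_comm (1 / 2 : ℝ)]
    exact hasSum_exp_mul_exp_evenKernel (by positivity) (by positivity) (x + 1 / 2) (y + 1 / 2)

lemma summable_hexLattice {b : ℝ} (hb : 0 < b) (z : EuclideanSpace ℝ (Fin 2)) :
    Summable fun l : hexLattice ↦ rexp (-(π * b) * ‖(l : EuclideanSpace ℝ (Fin 2)) - z‖ ^ 2) := by
  obtain ⟨x, y, rfl⟩ := exists_hexPoint_eq z
  exact (hasSum_hexLattice hb x y).summable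

lemma gaussianSum_hexLattice {b : ℝ} (hb : 0 < b) (x y : ℝ) :
    gaussianSum hexLattice b (hexPoint x y) = hexTheta b x y :=
  (hasSum_hexLattice hb x y).tsum_eq

lemma disjoint_hexLattice_add_deepHole :
    Disjoint hexLattice ((fun p ↦ p + deepHole) '' hexLattice) := by
  rw [Set.disjoint_left]
  rintro _ hp ⟨q, hq, rfl⟩
  obtain ⟨k, l, hkl⟩ := mem_hexLattice_iff.mp hp
  obtain ⟨k', l', rfl⟩ := mem_hexLattice_iff.mp hq
  simp only [deepHole_eq_hexPoint, hexPoint_add] at hkl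
  have hl : 3 * l' + 1 = 3 * l := by
    exact_mod_cast (by linarith [(hexPoint_inj.mp hkl).2] : (3 * l' + 1 : ℝ) = 3 * l)
  lia

lemma gaussianSum_honeycomb {b : ℝ} (hb : 0 < b) (z : EuclideanSpace ℝ (Fin 2)) :
    gaussianSum honeycomb b (√2 • z) =
      gaussianSum hexLattice (2 * b) z + gaussianSum hexLattice (2 * b) (z - deepHole) := by
  have hb₂ : 0 < 2 * b := by positivity
  rw [honeycomb, gaussianSum_image_smul _ _ (by positivity), sq_sqrt zero_le_two, mul_comm b,
    ← gaussianSum_image_add_right]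
  refine Summable.tsum_union_disjoint (f := fun p ↦ rexp (-(π * (2 * b)) * ‖p - z‖ ^ 2))
    disjoint_hexLattice_add_deepHole (summable_hexLattice hb₂ z) ?_
  rw [← (Equiv.Set.image _ hexLattice (add_left_injective deepHole)).summable_iff]
  simpa only [Function.comp_def, Equiv.Set.image_apply, sub_sub_eq_add_sub]
    using summable_hexLattice hb₂ (z - deepHole)

lemma gaussianPolarization_honeycomb_lt_hexLattice {b : ℝ} (hb : 0 < b) :
    gaussianPolarization honeycomb b < gaussianPolarization hexLattice b := by
  obtain ⟨L, hhole, hL⟩ := exists_lt_forall_le_hexTheta hb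
  have hb₂ : 0 < 2 * b := by positivity
  calc
    gaussianPolarization honeycomb b ≤ gaussianSum honeycomb b (√2 • hexPoint 1 (1 / 3)) :=
      gaussianPolarization_le_gaussianSum _ _ _
    _ = hexTheta (2 * b) 1 (1 / 3) + hexTheta (2 * b) (1 / 2) (1 / 6) := by
      rw [gaussianSum_honeycomb hb, deepHole_eq_hexPoint, hexPoint_sub, gaussianSum_hexLattice hb₂,
        gaussianSum_hexLattice hb₂]
      congr 2 <;> norm_num
    _ = 2 * hexTheta (2 * b) (1 / 2) (1 / 6) := by rw [hexTheta_two_mul_deepHole, ← two_mul]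
    _ < L := hhole
    _ ≤ gaussianPolarization hexLattice b := le_ciInf fun z ↦ by
      obtain ⟨x, y, rfl⟩ := exists_hexPoint_eq z
      exact (hL x y).trans_eq (gaussianSum_hexLattice hb x y).symm

end HexLattice

/-- For every density `ρ > 0` and every scale `α > 0`, the Gaussian polarization of the
rescaled hexagonal lattice strictly exceeds that of the rescaled honeycomb structure. -/
theorem hex_polarization_gt_honeycomb_polarization (ρ α : ℝ) (hρ : 0 < ρ) (hα : 0 < α) :
    (⨅ z : EuclideanSpace ℝ (Fin 2),
        ∑' l : hexLattice,
          Real.exp (-(Real.pi * α) *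
            ‖ρ ^ (-(1 : ℝ) / 2) • (l : EuclideanSpace ℝ (Fin 2)) - z‖ ^ 2)) >
    (⨅ z : EuclideanSpace ℝ (Fin 2),
        ∑' g : honeycomb,
          Real.exp (-(Real.pi * α) *
            ‖ρ ^ (-(1 : ℝ) / 2) • (g : EuclideanSpace ℝ (Fin 2)) - z‖ ^ 2)) := by
  have hs : 0 < ρ ^ (-(1 : ℝ) / 2) := rpow_pos_of_pos hρ _
  rw [gt_iff_lt, iInf_tsum_exp_norm_smul_sub _ _ hs.ne', iInf_tsum_exp_norm_smul_sub _ _ hs.ne']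
  exact gaussianPolarization_honeycomb_lt_hexLattice (by positivity)
end

section
/- For every α > 0, it holds that ∑_{(k,l) ∈ ℤ²} exp(−(2πα/√3)·Q₁(k,l)) > 2·∑_{(k,l) ∈ ℤ²} exp(−(4πα/√3)·Q₁(k,l)), where Q₁(k,l) = (k−1/3)² + (k−1/3)(l−1/3) + (l−1/3)². -/
open Real

/-- The shifted quadratic form `Q₁(k,l) = (k−1/3)² + (k−1/3)(l−1/3) + (l−1/3)²`. -/
noncomputable def Q1 (k l : ℤ) : ℝ :=
  ((k : ℝ) - 1 / 3) ^ 2 + ((k : ℝ) - 1 / 3) * ((l : ℝ) - 1 / 3) + ((l : ℝ) - 1 / 3) ^ 2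

/-!
Write `S t = ∑ exp (-π t Q₁)`, so that the claim is `2 * S (2 * t) < S t` for `t = 2 α / √3`.

For large `t` the inequality holds term by term: `Q₁ ≥ 1 / 3`, so every term `x` of `S t` is below
`1 / 2`, and the corresponding term of `2 * S (2 * t)` is `2 * x ^ 2 < x`.

For small `t` one passes to the dual lattice. According to the parity of `k + l`, the form `Q₁`
becomes `3 (m - 1/3)² + n²` or `3 (m + 1/6)² + (n + 1/2)²`, so `S t` is a sum of two products of
one-dimensional theta series, and Poisson summation in each factor gives
`S t = 2 / (√3 t) * b (1 / (3 t))`, where `b s = 1 - 3 y⁴ + O(y⁹)` with `y = exp (-π s)`. The claim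
becomes `b s < b (2 s)` for `s = 1 / (6 t)`. Doubling `s` squares `y`, so this follows from the
expansion once `y ≤ 1 / 2`. The two ranges of `t` overlap around `t = 7 / 10`.
-/

open HurwitzZeta

lemma mul_tsum_sq_lt_tsum {ι : Type*} [Nonempty ι] {f : ι → ℝ} {c : ℝ} (hc : 0 ≤ c)
    (hf : Summable f) (hpos : ∀ i, 0 < f i) (hlt : ∀ i, c * f i < 1) :
    c * ∑' i, f i ^ 2 < ∑' i, f i := by
  have hterm (i : ι) : c * f i ^ 2 < f i := by
    calc c * f i ^ 2 = c * f i * f i := by ring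
      _ < f i := mul_lt_of_lt_one_left (hpos i) (hlt i)
  have hsum : Summable fun i ↦ c * f i ^ 2 :=
    hf.of_nonneg_of_le (fun i ↦ by positivity) fun i ↦ (hterm i).le
  rw [← tsum_mul_left]
  exact hsum.tsum_lt_tsum (fun i ↦ (hterm i).le) (hterm (Classical.arbitrary ι)) hf

lemma norm_mul_sub_mul_le_of_le {R : Type*} [NonUnitalSeminormedRing R] {x x' y y' : R}
    {δ ε X Y : ℝ} (hx : ‖x - x'‖ ≤ δ) (hy : ‖y - y'‖ ≤ ε) (hX : ‖x'‖ ≤ X) (hY : ‖y‖ ≤ Y) :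
    ‖x * y - x' * y'‖ ≤ δ * Y + X * ε := by
  have hδ : 0 ≤ δ := (norm_nonneg _).trans hx
  have hX₀ : 0 ≤ X := (norm_nonneg _).trans hX
  calc ‖x * y - x' * y'‖ = ‖(x - x') * y + x' * (y - y')‖ := by
        rw [sub_mul, mul_sub, sub_add_sub_cancel]
    _ ≤ ‖x - x'‖ * ‖y‖ + ‖x'‖ * ‖y - y'‖ :=
        (norm_add_le _ _).trans (add_le_add (norm_mul_le _ _) (norm_mul_le _ _))
    _ ≤ δ * Y + X * ε := by gcongr

lemma hasSum_int_prod_of_even_of_odd {M : Type*} [AddCommMonoid M] [TopologicalSpace M]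
    [ContinuousAdd M] {f : ℤ × ℤ → M} {a b : M}
    (heven : HasSum (fun p : ℤ × ℤ ↦ f (p.1 + p.2, p.1 - p.2)) a)
    (hodd : HasSum (fun p : ℤ × ℤ ↦ f (p.1 + p.2 + 1, p.1 - p.2)) b) :
    HasSum f (a + b) := by
  let evenPair : ℤ × ℤ → ℤ × ℤ := fun p ↦ (p.1 + p.2, p.1 - p.2)
  let oddPair : ℤ × ℤ → ℤ × ℤ := fun p ↦ (p.1 + p.2 + 1, p.1 - p.2)
  have injective_evenPair : evenPair.Injective := by
    rintro ⟨m, n⟩ ⟨m', n'⟩ h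
    simp only [evenPair, Prod.mk.injEq] at h ⊢
    lia
  have injective_oddPair : oddPair.Injective := by
    rintro ⟨m, n⟩ ⟨m', n'⟩ h
    simp only [oddPair, Prod.mk.injEq] at h ⊢
    lia
  have range_evenPair : Set.range evenPair = {p | Even (p.1 + p.2)} := by
    ext ⟨k, l⟩
    simp only [evenPair, Set.mem_range, Prod.exists, Prod.mk.injEq, Set.mem_ofPred_eq]
    exact ⟨fun ⟨m, n, hk, hl⟩ ↦ ⟨m, by lia⟩, fun ⟨m, hm⟩ ↦ ⟨m, k - m, by lia, by lia⟩⟩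
  have range_oddPair : Set.range oddPair = {p | Even (p.1 + p.2)}ᶜ := by
    ext ⟨k, l⟩
    simp only [oddPair, Set.mem_range, Prod.exists, Prod.mk.injEq, Set.mem_compl_iff,
      Set.mem_ofPred_eq, Int.not_even_iff_odd]
    exact ⟨fun ⟨m, n, hk, hl⟩ ↦ ⟨m, by lia⟩, fun ⟨m, hm⟩ ↦ ⟨m, k - m - 1, by lia, by lia⟩⟩
  have hcompl : IsCompl (Set.range evenPair) (Set.range oddPair) := by
    rw [range_evenPair, range_oddPair]
    exact isCompl_compl
  exact HasSum.add_isCompl hcompl (injective_evenPair.hasSum_range_iff.mpr heven)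
    (injective_oddPair.hasSum_range_iff.mpr hodd)

lemma hasSum_exp_diagonal_form (a b : ℝ) {s t : ℝ} (hs : 0 < s) (ht : 0 < t) :
    HasSum (fun p : ℤ × ℤ ↦ exp (-π * (s * (p.1 + a) ^ 2 + t * (p.2 + b) ^ 2)))
      (cosKernel a (1 / s) * cosKernel b (1 / t) / √(s * t)) := by
  have ha := hasSum_int_evenKernel a hs
  have hb := hasSum_int_evenKernel b ht
  have hab := ha.mul hb <| ha.summable.mul_of_nonneg hb.summable
    (fun _ ↦ (exp_pos _).le) fun _ ↦ (exp_pos _).le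
  have hvalue : evenKernel a s * evenKernel b t =
      cosKernel a (1 / s) * cosKernel b (1 / t) / √(s * t) := by
    rw [evenKernel_functional_equation, evenKernel_functional_equation, ← sqrt_eq_rpow,
      ← sqrt_eq_rpow, sqrt_mul hs.le]
    ring
  rw [← hvalue]
  refine hab.congr_fun fun p ↦ ?_
  rw [← exp_add]
  ring_nf

lemma exp_neg_pi_mul_nat_mul (n : ℕ) (s : ℝ) : exp (-π * (n * s)) = exp (-π * s) ^ n := by
  rw [← exp_nat_mul]
  ring_nf

lemma exp_neg_pi_mul_lt_one_iff {t : ℝ} : exp (-π * t) < 1 ↔ 0 < t := by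
  rw [exp_lt_one_iff, neg_mul, neg_lt_zero, mul_pos_iff_of_pos_left pi_pos]

lemma abs_cosKernel_sub_le (a : ℝ) {t : ℝ} (ht : 0 < t) (N : ℕ) :
    |cosKernel a t -
        (1 + ∑ n ∈ Finset.range N, 2 * cos (2 * π * a * (n + 1)) * exp (-π * t) ^ (n + 1) ^ 2)| ≤
      2 * exp (-π * t) ^ (N + 1) ^ 2 / (1 - exp (-π * t)) := by
  have hy_lt : exp (-π * t) < 1 := exp_neg_pi_mul_lt_one_iff.mpr ht
  have hterm (n : ℕ) : exp (-π * (n + 1) ^ 2 * t) = exp (-π * t) ^ (n + 1) ^ 2 := by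
    rw [mul_assoc]
    exact mod_cast exp_neg_pi_mul_nat_mul ((n + 1) ^ 2) t
  have hsum := hasSum_nat_cosKernel₀ a ht
  simp only [hterm] at hsum
  set y := exp (-π * t)
  have hy_pos : 0 < y := exp_pos _
  have htail := (hasSum_nat_add_iff' N).mpr hsum
  have hgeom : HasSum (fun n ↦ 2 * y ^ (N + 1) ^ 2 * y ^ n) (2 * y ^ (N + 1) ^ 2 / (1 - y)) :=
    (hasSum_geometric_of_lt_one hy_pos.le hy_lt).mul_left _
  rw [← sub_sub, ← norm_eq_abs]
  refine htail.norm_le_of_bounded hgeom fun n ↦ ?_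
  have hexponent : (N + 1) ^ 2 + n ≤ (n + N + 1) ^ 2 := by nlinarith [Nat.zero_le (n * N)]
  calc ‖2 * cos (2 * π * a * (↑(n + N) + 1)) * y ^ (n + N + 1) ^ 2‖
      = 2 * |cos (2 * π * a * (↑(n + N) + 1))| * y ^ (n + N + 1) ^ 2 := by
        rw [norm_mul, norm_mul, norm_two, norm_eq_abs, norm_of_nonneg (by positivity)]
    _ ≤ 2 * 1 * y ^ ((N + 1) ^ 2 + n) := by
        gcongr 2 * ?_ * ?_
        · exact abs_cos_le_one _
        · exact pow_le_pow_of_le_one hy_pos.le hy_lt.le hexponent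
    _ = 2 * y ^ (N + 1) ^ 2 * y ^ n := by ring

lemma abs_cosKernel_le (a : ℝ) {t : ℝ} (ht : 0 < t) :
    |cosKernel a t| ≤ 1 + 2 * exp (-π * t) / (1 - exp (-π * t)) := by
  have hsub : |cosKernel a t - 1| ≤ 2 * exp (-π * t) / (1 - exp (-π * t)) := by
    simpa using abs_cosKernel_sub_le a ht 0
  calc |cosKernel a t| = |1 + (cosKernel a t - 1)| := by rw [add_sub_cancel]
    _ ≤ |1| + |cosKernel a t - 1| := abs_add_le _ _
    _ ≤ 1 + 2 * exp (-π * t) / (1 - exp (-π * t)) := by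
      rw [abs_one]
      gcongr

lemma abs_cosKernel_sub_one_term_le (a : ℝ) {t : ℝ} (hy : exp (-π * t) ≤ 1 / 8) :
    |cosKernel a t - (1 + 2 * cos (2 * π * a) * exp (-π * t))| ≤ 3 * exp (-π * t) ^ 4 := by
  have ht : 0 < t := exp_neg_pi_mul_lt_one_iff.mp (by linarith)
  have hremainder : 2 * exp (-π * t) ^ 4 / (1 - exp (-π * t)) ≤ 3 * exp (-π * t) ^ 4 := by
    rw [div_le_iff₀ (by linarith)]
    nlinarith [pow_pos (exp_pos (-π * t)) 4]
  refine le_trans ?_ hremainder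
  simpa using abs_cosKernel_sub_le a ht 1

lemma abs_cosKernel_sub_two_terms_le (a : ℝ) {t : ℝ} (hy : exp (-π * t) ≤ 1 / 2) :
    |cosKernel a t - (1 + 2 * cos (2 * π * a) * exp (-π * t) +
        2 * cos (2 * π * a * 2) * exp (-π * t) ^ 4)| ≤ 4 * exp (-π * t) ^ 9 := by
  have ht : 0 < t := exp_neg_pi_mul_lt_one_iff.mp (by linarith)
  have hremainder : 2 * exp (-π * t) ^ 9 / (1 - exp (-π * t)) ≤ 4 * exp (-π * t) ^ 9 := by
    rw [div_le_iff₀ (by linarith)]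
    nlinarith [pow_pos (exp_pos (-π * t)) 9]
  refine le_trans ?_ hremainder
  simpa [Finset.sum_range_succ, one_add_one_eq_two, two_add_one_eq_three, ← add_assoc]
    using abs_cosKernel_sub_le a ht 2

lemma abs_cosKernel_mul_cosKernel_sub_le_s2 (a b : ℝ) {s : ℝ} (hy : exp (-π * s) ≤ 1 / 2) :
    |cosKernel a s * cosKernel b (3 * s) -
        (1 + 2 * cos (2 * π * a) * exp (-π * s) + 2 * cos (2 * π * a * 2) * exp (-π * s) ^ 4) *
          (1 + 2 * cos (2 * π * b) * exp (-π * s) ^ 3)| ≤ 7 * exp (-π * s) ^ 9 := by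
  have hs : 0 < s := exp_neg_pi_mul_lt_one_iff.mp (by linarith)
  have hy₃ : exp (-π * (3 * s)) = exp (-π * s) ^ 3 := mod_cast exp_neg_pi_mul_nat_mul 3 s
  have hcube : exp (-π * s) ^ 3 ≤ 1 / 8 :=
    (pow_le_pow_left₀ (exp_pos _).le hy 3).trans_eq (by norm_num)
  have ha := abs_cosKernel_sub_two_terms_le a hy
  have hb := abs_cosKernel_sub_one_term_le b (hy₃ ▸ hcube)
  rw [hy₃] at hb
  set y := exp (-π * s)
  have hy_pos : 0 < y := exp_pos _
  have hfirst : |1 + 2 * cos (2 * π * a) * y + 2 * cos (2 * π * a * 2) * y ^ 4| ≤ 17 / 8 := by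
    calc _ ≤ |1| + |2 * cos (2 * π * a) * y| + |2 * cos (2 * π * a * 2) * y ^ 4| :=
          abs_add_three _ _ _
      _ = 1 + 2 * |cos (2 * π * a)| * y + 2 * |cos (2 * π * a * 2)| * y ^ 4 := by
        simp only [abs_mul, abs_one, abs_two, abs_pow, abs_of_pos hy_pos]
      _ ≤ 1 + 2 * 1 * (1 / 2) + 2 * 1 * (1 / 2) ^ 4 := by
        gcongr <;> exact abs_cos_le_one _
      _ = 17 / 8 := by norm_num
  have hsecond : |cosKernel b (3 * s)| ≤ 4 / 3 := by
    have hfrac : 2 * y ^ 3 / (1 - y ^ 3) ≤ 1 / 3 := by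
      rw [div_le_iff₀ (by linarith)]
      linarith
    have hbound := abs_cosKernel_le b (by positivity : 0 < 3 * s)
    rw [hy₃] at hbound
    linarith
  refine (norm_mul_sub_mul_le_of_le (R := ℝ) ha hb hfirst hsecond).trans ?_
  calc 4 * y ^ 9 * (4 / 3) + 17 / 8 * (3 * (y ^ 3) ^ 4)
      = y ^ 9 * (16 / 3 + 51 / 8 * y ^ 3) := by ring
    _ ≤ y ^ 9 * (16 / 3 + 51 / 8 * (1 / 8)) := by gcongr
    _ ≤ 7 * y ^ 9 := by linarith [pow_pos hy_pos 9]

/-- The theta series `∑ ω ^ (u - v) * q ^ (u² + u v + v²)` over `(u, v) ∈ ℤ²`, with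
`ω = exp (2 π i / 3)` and `q = exp (-4 π s)` (the cubic theta function `b` of the Borweins). It is
the dual of the deep-hole sum of the hexagonal lattice. It is encoded by its expression through
one-dimensional theta series, the two products being the sums of `cos (2 π m / 3) * y ^ (m² + 3 n²)`
and of `(-1) ^ (m + n)` times this term over `(m, n) ∈ ℤ²`, with `y = exp (-π s)`. -/
noncomputable def hexDualTheta (s : ℝ) : ℝ :=
  (cosKernel ((-1 / 3 : ℝ) : UnitAddCircle) s * cosKernel ((0 : ℝ) : UnitAddCircle) (3 * s) +
    cosKernel ((1 / 6 : ℝ) : UnitAddCircle) s * cosKernel ((1 / 2 : ℝ) : UnitAddCircle) (3 * s)) / 2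

lemma abs_hexDualTheta_sub_le {s : ℝ} (hy : exp (-π * s) ≤ 1 / 2) :
    |hexDualTheta s - (1 - 3 * exp (-π * s) ^ 4)| ≤ 7 * exp (-π * s) ^ 9 := by
  have cos_two_thirds : cos (π * (2 / 3)) = -(1 / 2) := by
    rw [show π * (2 / 3) = π - π / 3 by ring, cos_pi_sub, cos_pi_div_three]
  have cos_four_thirds : cos (π * (4 / 3)) = -(1 / 2) := by
    rw [show π * (4 / 3) = π / 3 + π by ring, cos_add_pi, cos_pi_div_three]
  have heven := abs_cosKernel_mul_cosKernel_sub_le_s2 (-1 / 3) 0 hy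
  have hodd := abs_cosKernel_mul_cosKernel_sub_le_s2 (1 / 6) (1 / 2) hy
  rw [show 2 * π * (-1 / 3) * 2 = -(π * (4 / 3)) by ring,
    show 2 * π * (-1 / 3) = -(π * (2 / 3)) by ring, cos_neg, cos_neg,
    cos_two_thirds, cos_four_thirds, mul_zero, cos_zero] at heven
  rw [show 2 * π * (1 / 6) * 2 = π * (2 / 3) by ring, show 2 * π * (1 / 6) = π / 3 by ring,
    show 2 * π * (1 / 2) = π by ring, cos_pi_div_three, cos_two_thirds, cos_pi] at hodd
  -- The terms in `y`, `y ^ 3` and `y ^ 7` cancel between the two products.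
  rw [hexDualTheta]
  rw [abs_le] at heven hodd ⊢
  constructor <;> linarith

lemma hexDualTheta_lt_hexDualTheta_two_mul {s : ℝ} (hy : exp (-π * s) ≤ 1 / 2) :
    hexDualTheta s < hexDualTheta (2 * s) := by
  have hsq : exp (-π * (2 * s)) = exp (-π * s) ^ 2 := mod_cast exp_neg_pi_mul_nat_mul 2 s
  have hy₂ : exp (-π * (2 * s)) ≤ 1 / 2 := by
    rw [hsq]
    nlinarith [exp_pos (-π * s)]
  have hupper := (abs_le.mp (abs_hexDualTheta_sub_le hy)).2
  have hlower := (abs_le.mp (abs_hexDualTheta_sub_le hy₂)).1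
  rw [hsq] at hlower
  set y := exp (-π * s)
  have hy_pos : 0 < y := exp_pos _
  have hy_pow (n : ℕ) : y ^ (4 + n) ≤ y ^ 4 * (1 / 2) ^ n := by
    rw [pow_add]
    gcongr
  have hgap : 7 * y ^ 9 + 3 * y ^ 8 + 7 * y ^ 18 < 3 * y ^ 4 := by
    linarith [hy_pow 5, hy_pow 4, hy_pow 14, pow_pos hy_pos 4]
  linarith

lemma Q1_add_sub (m n : ℤ) : Q1 (m + n) (m - n) = 3 * (m - 1 / 3) ^ 2 + n ^ 2 := by
  simp only [Q1]
  push_cast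
  ring

lemma Q1_add_add_one_sub (m n : ℤ) :
    Q1 (m + n + 1) (m - n) = 3 * (m + 1 / 6) ^ 2 + (n + 1 / 2) ^ 2 := by
  simp only [Q1]
  push_cast
  ring

lemma hasSum_exp_Q1 {t : ℝ} (ht : 0 < t) :
    HasSum (fun p : ℤ × ℤ ↦ exp (-(π * t) * Q1 p.1 p.2))
      (2 / (√3 * t) * hexDualTheta (1 / (3 * t))) := by
  have hsqrt : √(3 * t * t) = √3 * t := by
    rw [mul_assoc, sqrt_mul (by norm_num), sqrt_mul_self ht.le]
  have heven := hasSum_exp_diagonal_form (-1 / 3) 0 (by positivity : 0 < 3 * t) ht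
  have hodd := hasSum_exp_diagonal_form (1 / 6) (1 / 2) (by positivity : 0 < 3 * t) ht
  have hscale : 3 * (1 / (3 * t)) = 1 / t := by field_simp
  convert hasSum_int_prod_of_even_of_odd (f := fun p ↦ exp (-(π * t) * Q1 p.1 p.2))
    (heven.congr_fun ?_) (hodd.congr_fun ?_) using 1
  · rw [hexDualTheta, hscale, hsqrt]
    ring
  · intro p
    rw [Q1_add_sub]
    ring_nf
  · intro p
    rw [Q1_add_add_one_sub]
    ring_nf

lemma one_third_le_Q1 (k l : ℤ) : 1 / 3 ≤ Q1 k l := by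
  have hint : (0 : ℤ) ≤ k ^ 2 + k * l + l ^ 2 - k - l := by
    linarith [Int.le_self_sq k, Int.le_self_sq l, Int.le_self_sq (k + l), add_sq k l]
  have hreal : (0 : ℝ) ≤ k ^ 2 + k * l + l ^ 2 - k - l := mod_cast hint
  rw [Q1]
  linarith

lemma two_mul_tsum_exp_Q1_lt_of_log_two_lt_mul {t : ℝ} (hlog : log 2 < π * t / 3) :
    2 * ∑' p : ℤ × ℤ, exp (-(π * (2 * t)) * Q1 p.1 p.2) <
      ∑' p : ℤ × ℤ, exp (-(π * t) * Q1 p.1 p.2) := by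
  have ht : 0 < t :=
    (mul_pos_iff_of_pos_left pi_pos).mp (by linarith [log_pos one_lt_two])
  have hsq (p : ℤ × ℤ) :
      exp (-(π * (2 * t)) * Q1 p.1 p.2) = exp (-(π * t) * Q1 p.1 p.2) ^ 2 := by
    rw [← exp_nat_mul]
    push_cast
    ring_nf
  simp only [hsq]
  refine mul_tsum_sq_lt_tsum zero_le_two (hasSum_exp_Q1 ht).summable (fun p ↦ exp_pos _) fun p ↦ ?_
  have hexponent : -(π * t) * Q1 p.1 p.2 < -log 2 := by
    nlinarith [one_third_le_Q1 p.1 p.2, mul_pos pi_pos ht]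
  calc 2 * exp (-(π * t) * Q1 p.1 p.2) < 2 * exp (-log 2) := by gcongr
    _ = 1 := by rw [exp_neg, exp_log two_pos, mul_inv_cancel₀ two_ne_zero]

lemma two_mul_tsum_exp_Q1_lt_of_log_two_le_div {t : ℝ} (hlog : log 2 ≤ π / (6 * t)) :
    2 * ∑' p : ℤ × ℤ, exp (-(π * (2 * t)) * Q1 p.1 p.2) <
      ∑' p : ℤ × ℤ, exp (-(π * t) * Q1 p.1 p.2) := by
  have ht : 0 < t := by
    have hdenom := (div_pos_iff_of_pos_left pi_pos).mp ((log_pos one_lt_two).trans_le hlog)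
    linarith
  have hy : exp (-π * (1 / (6 * t))) ≤ 1 / 2 := by
    rw [← le_log_iff_exp_le (by norm_num), one_div 2, log_inv, neg_mul, mul_one_div]
    exact neg_le_neg hlog
  have hdual : hexDualTheta (1 / (3 * (2 * t))) < hexDualTheta (1 / (3 * t)) := by
    convert hexDualTheta_lt_hexDualTheta_two_mul hy using 2
    · ring
    · ring
  rw [(hasSum_exp_Q1 ht).tsum_eq, (hasSum_exp_Q1 (by positivity : 0 < 2 * t)).tsum_eq]
  calc 2 * (2 / (√3 * (2 * t)) * hexDualTheta (1 / (3 * (2 * t))))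
      = 2 / (√3 * t) * hexDualTheta (1 / (3 * (2 * t))) := by field_simp
    _ < 2 / (√3 * t) * hexDualTheta (1 / (3 * t)) := by gcongr

lemma two_mul_tsum_exp_Q1_lt {t : ℝ} (ht : 0 < t) :
    2 * ∑' p : ℤ × ℤ, exp (-(π * (2 * t)) * Q1 p.1 p.2) <
      ∑' p : ℤ × ℤ, exp (-(π * t) * Q1 p.1 p.2) := by
  have hlog : log 2 < 7 / 10 := log_two_lt_d9.trans (by norm_num)
  rcases le_total (7 / 10) t with hlarge | hsmall
  · refine two_mul_tsum_exp_Q1_lt_of_log_two_lt_mul ?_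
    nlinarith [pi_gt_three]
  · refine two_mul_tsum_exp_Q1_lt_of_log_two_le_div ?_
    rw [le_div_iff₀ (by positivity)]
    nlinarith [pi_gt_three]

/-- For every `α > 0`, the Gaussian sum of the hexagonal lattice at its deep hole exceeds
the corresponding sum for the honeycomb structure at its deep hole. -/
theorem hex_deepHole_sum_gt_honeycomb_deepHole_sum (α : ℝ) (hα : 0 < α) :
    (∑' p : ℤ × ℤ, Real.exp (-(2 * Real.pi * α / Real.sqrt 3) * Q1 p.1 p.2)) >
      2 * ∑' p : ℤ × ℤ, Real.exp (-(4 * Real.pi * α / Real.sqrt 3) * Q1 p.1 p.2) := by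
  have hsum := two_mul_tsum_exp_Q1_lt (t := 2 * α / √3) (by positivity)
  have hhex : 2 * π * α / √3 = π * (2 * α / √3) := by ring
  have hhoney : 4 * π * α / √3 = π * (2 * (2 * α / √3)) := by ring
  rwa [hhex, hhoney]
end

section
/- For every α > √3·log 5/π, it holds that ∑_{(k,l) ∈ ℤ²} exp(−(2πα/√3)·(k²+kl+l²))·cos(2π(k−l)/3) > ∑_{(k,l) ∈ ℤ²} exp(−(πα/√3)·(k²+kl+l²))·cos(2π(k−l)/3). -/
/-!
The signed theta series `c ↦ ∑ exp (-c * Q) * cos (2π(k - l)/3)`, with `Q = k² + kl + l²`, is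
strictly increasing on all of `(0, ∞)`, and the theorem compares its values at `c` and `2c`.

For `c ≤ 4`, Poisson summation in both variables turns the series into a positive multiple of
`∑ exp (-(4π²/3) * Q(m - 1/3, n - 1/3) / c) / c`, whose character has become a shift. The function
`exp (-a / c) / c` increases for `c ≤ a`, and here `a ≥ 4π²/9 > 4` because the shifted lattice
stays at `Q ≥ 1/3` from the origin.

For `c ≥ 4`, the six vectors with `Q = 1` dominate. Each has `cos = -1/2`, so passing from `c` to
`d > c` they gain `3 * (exp (-c) - exp (-d))` in total; all other terms together lose less, since
`x ^ (n + 1) - y ^ (n + 1) ≤ (x - y) * (2 * x) ^ n` and `n = Q - 1` grows at least like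
`2 / 3 * (|k| + |l|)`.
-/

open Real Set

lemma cos_two_pi_mul_int_div_three {n : ℤ} (hn : ¬ 3 ∣ n) : cos (2 * π * n / 3) = -1 / 2 := by
  have hcos : cos (2 * π / 3) = -1 / 2 := by
    rw [show 2 * π / 3 = π - π / 3 by ring, cos_pi_sub, cos_pi_div_three]
    norm_num
  obtain ⟨m, rfl | rfl⟩ : ∃ m, n = 3 * m + 1 ∨ n = 3 * m - 1 := ⟨(n + 1) / 3, by omega⟩
  · rw [← hcos, ← cos_add_int_mul_two_pi (2 * π / 3) m]
    push_cast
    ring_nf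
  · rw [← hcos, ← cos_neg (2 * π / 3), ← cos_add_int_mul_two_pi (-(2 * π / 3)) m]
    push_cast
    ring_nf

lemma exp_neg_four_le : rexp (-4) ≤ 1 / 16 := by
  rw [show (-4 : ℝ) = (4 : ℕ) * (-1) by norm_num, exp_nat_mul]
  calc
    rexp (-1) ^ 4 ≤ (1 / 2) ^ 4 := by gcongr; exact exp_neg_one_lt_half.le
    _ = 1 / 16 := by norm_num

lemma pow_succ_sub_pow_succ_le {x y : ℝ} (hy : 0 ≤ y) (hyx : y ≤ x) (n : ℕ) :
    x ^ (n + 1) - y ^ (n + 1) ≤ (x - y) * (2 * x) ^ n := by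
  have hn : ((n + 1 : ℕ) : ℝ) ≤ 2 ^ n := mod_cast Nat.lt_two_pow_self
  calc
    x ^ (n + 1) - y ^ (n + 1) ≤ (x - y) * (n + 1 : ℕ) * x ^ n := by
      simpa [abs_of_nonneg, hy, hyx, hy.trans hyx] using
        (le_abs_self _).trans (abs_pow_sub_pow_le x y (n + 1))
    _ ≤ (x - y) * 2 ^ n * x ^ n := by
      have := sub_nonneg.2 hyx
      have := hy.trans hyx
      gcongr
    _ = (x - y) * (2 * x) ^ n := by rw [mul_pow, mul_assoc]

lemma strictMonoOn_exp_neg_div_div (a : ℝ) :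
    StrictMonoOn (fun c ↦ rexp (-a / c) / c) (Ioc 0 a) := by
  intro c ⟨hc, _⟩ d ⟨hd, hda⟩ hcd
  have hpos : 0 < d / c - 1 := sub_pos.2 ((one_lt_div hc).2 hcd)
  have hgap : d / c - 1 ≤ a / c - a / d := by
    rw [show a / c - a / d = a / d * (d / c - 1) by field_simp]
    exact le_mul_of_one_le_left hpos.le ((one_le_div hd).2 hda)
  have hratio : d / c < rexp (a / c - a / d) := by
    linarith [add_one_lt_exp (hpos.trans_le hgap).ne']
  calc
    rexp (-a / c) / c = d / c * rexp (-a / c) / d := by field_simp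
    _ < rexp (a / c - a / d) * rexp (-a / c) / d := by gcongr
    _ = rexp (-a / d) / d := by rw [← exp_add]; ring_nf

lemma hasSum_pow_natAbs {r : ℝ} (h₀ : 0 ≤ r) (h₁ : r < 1) :
    HasSum (fun k : ℤ ↦ r ^ k.natAbs) ((1 + r) / (1 - r)) := by
  have hgeom := hasSum_geometric_of_lt_one h₀ h₁
  have hneg : HasSum (fun n : ℕ ↦ r ^ (-(n + 1 : ℤ)).natAbs) (r * (1 - r)⁻¹) := by
    simp_rw [show ∀ n : ℕ, (-(n + 1 : ℤ)).natAbs = n + 1 by omega, pow_succ']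
    exact hgeom.mul_left r
  rw [show (1 + r) / (1 - r) = (1 - r)⁻¹ + r * (1 - r)⁻¹ by ring]
  exact HasSum.of_nat_of_neg_add_one hgeom hneg

lemma hasSum_pow_natAbs_mul_pow_natAbs {r : ℝ} (h₀ : 0 ≤ r) (h₁ : r < 1) :
    HasSum (fun p : ℤ × ℤ ↦ r ^ p.1.natAbs * r ^ p.2.natAbs) (((1 + r) / (1 - r)) ^ 2) := by
  have hgeom := hasSum_pow_natAbs h₀ h₁
  have hsum := hgeom.summable.mul_of_nonneg hgeom.summable (fun _ ↦ pow_nonneg h₀ _)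
    fun _ ↦ pow_nonneg h₀ _
  simpa only [pow_two] using hgeom.mul hgeom hsum

lemma summable_exp_neg_mul_int_sub_sq {c : ℝ} (hc : 0 < c) (u : ℝ) :
    Summable fun n : ℤ ↦ rexp (-c * (n - u) ^ 2) := by
  refine (HurwitzZeta.hasSum_int_evenKernel (-u) (div_pos hc pi_pos)).summable.congr fun n ↦ ?_
  congr 1
  field_simp
  ring

lemma tsum_cexp_neg_mul_int_sq_add {a : ℝ} (ha : 0 < a) (s : ℂ) :
    ∑' n : ℤ, Complex.exp (-a * n ^ 2 + 2 * π * Complex.I * s * n) =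
      √(π / a) * ∑' n : ℤ, Complex.exp (-(π ^ 2 / a) * (n - s) ^ 2) := by
  have hroot : 1 / ((a / π : ℝ) : ℂ) ^ (1 / 2 : ℂ) = √(π / a) := by
    rw [show (1 / 2 : ℂ) = ((1 / 2 : ℝ) : ℂ) by norm_num, ← Complex.ofReal_cpow (by positivity),
      ← sqrt_eq_rpow, ← inv_div π a, sqrt_inv]
    simp
  have hpoisson := Complex.tsum_exp_neg_quadratic (a := ((a / π : ℝ) : ℂ))
    (by rw [Complex.ofReal_re]; positivity) (Complex.I * s)
  rw [hroot] at hpoisson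
  simp only [← mul_assoc, Complex.I_mul_I, neg_one_mul, ← sub_eq_add_neg] at hpoisson
  convert hpoisson using 5
  all_goals push_cast; field_simp

/-- The norm form `x² + xy + y²` of the hexagonal (Eisenstein) lattice, over any semiring so that
integer and real arguments can be mixed. -/
def hexForm {R : Type*} [CommSemiring R] (x y : R) : R := x ^ 2 + x * y + y ^ 2

lemma intCast_hexForm {R : Type*} [CommRing R] (k l : ℤ) :
    ((hexForm k l : ℤ) : R) = hexForm (k : R) l := by
  simp [hexForm]

lemma half_sq_add_sq_le_hexForm (x y : ℝ) : (x ^ 2 + y ^ 2) / 2 ≤ hexForm x y := by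
  unfold hexForm
  linarith [sq_nonneg (x + y)]

lemma one_third_le_hexForm_sub_one_third (m n : ℤ) :
    1 / 3 ≤ hexForm (m - 1 / 3 : ℝ) (n - 1 / 3) := by
  have hint : m + n ≤ m ^ 2 + m * n + n ^ 2 := by
    rcases eq_or_ne m 0 with rfl | hm
    · simpa using Int.le_self_sq n
    · nlinarith [sq_nonneg (m + n - 1), sq_nonneg n, Int.one_le_abs hm, sq_abs m]
  have : (m + n : ℝ) ≤ m ^ 2 + m * n + n ^ 2 := mod_cast hint
  unfold hexForm
  linarith

/-- The nonzero vectors of least norm in the hexagonal lattice, i.e. the units of the Eisenstein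
integers. -/
def hexUnits : Finset (ℤ × ℤ) := {(1, 0), (-1, 0), (0, 1), (0, -1), (1, -1), (-1, 1)}

lemma two_mul_abs_add_abs_le_of_notMem_hexUnits {k l : ℤ} (h₀ : (k, l) ≠ 0)
    (h : (k, l) ∉ hexUnits) : 2 * (|k| + |l|) ≤ 3 * (hexForm k l - 1) := by
  have hform : (|k| + |l|) ^ 2 ≤ 4 * hexForm k l := by
    unfold hexForm
    cases abs_cases k <;> cases abs_cases l <;> nlinarith [sq_nonneg (k + l), sq_nonneg (k - l)]
  rcases le_or_gt 4 (|k| + |l|) with hlarge | hsmall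
  · nlinarith
  · have hk : |k| ≤ 3 := by linarith [abs_nonneg l]
    have hl : |l| ≤ 3 := by linarith [abs_nonneg k]
    rw [abs_le] at hk hl
    obtain ⟨hk₁, hk₂⟩ := hk
    obtain ⟨hl₁, hl₂⟩ := hl
    interval_cases k <;> interval_cases l <;> revert h₀ h <;> decide

lemma summable_exp_neg_mul_hexForm_sub {c : ℝ} (hc : 0 < c) (u v : ℝ) :
    Summable fun p : ℤ × ℤ ↦ rexp (-c * hexForm (p.1 - u) (p.2 - v)) := by
  have hgauss (w : ℝ) := summable_exp_neg_mul_int_sub_sq (half_pos hc) w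
  refine Summable.of_nonneg_of_le (fun p ↦ by positivity) (fun p ↦ ?_)
    ((hgauss u).mul_of_nonneg (hgauss v) (fun _ ↦ by positivity) fun _ ↦ by positivity)
  rw [← Real.exp_add, Real.exp_le_exp]
  nlinarith [half_sq_add_sq_le_hexForm (p.1 - u) (p.2 - v)]

lemma summable_exp_neg_mul_hexForm {c : ℝ} (hc : 0 < c) :
    Summable fun p : ℤ × ℤ ↦ rexp (-c * hexForm (p.1 : ℝ) p.2) := by
  simpa using summable_exp_neg_mul_hexForm_sub hc 0 0

lemma summable_cexp_neg_mul_hexForm {c : ℝ} (hc : 0 < c) (u v : ℝ) :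
    Summable fun p : ℤ × ℤ ↦ Complex.exp (-c * hexForm (p.1 : ℂ) p.2 +
      2 * π * Complex.I * (u * p.1 - v * p.2)) := by
  refine .of_norm ((summable_exp_neg_mul_hexForm hc).congr fun p ↦ ?_)
  simp [Complex.norm_exp, hexForm, pow_two]

/-- The summand halfway through the two-dimensional Poisson summation: the index `m` is dual to the
first lattice coordinate, while the second one `l` has not been transformed yet. -/
noncomputable def hexMixedTerm (c u v : ℝ) (l m : ℤ) : ℂ :=
  Complex.exp (-(π ^ 2 / c) * (m - u) ^ 2) *
    Complex.exp (-(3 * c / 4 : ℝ) * l ^ 2 + 2 * π * Complex.I * ((m - u) / 2 - v) * l)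

lemma summable_hexMixedTerm {c : ℝ} (hc : 0 < c) (u v : ℝ) :
    Summable (Function.uncurry (hexMixedTerm c u v)) := by
  have hl := summable_exp_neg_mul_int_sub_sq (c := 3 * c / 4) (by positivity) 0
  have hm := summable_exp_neg_mul_int_sub_sq (c := π ^ 2 / c) (by positivity) u
  refine .of_norm ((hl.mul_of_nonneg hm (fun _ ↦ by positivity) fun _ ↦ by positivity).congr
    fun p ↦ ?_)
  rw [Function.uncurry, hexMixedTerm, norm_mul, mul_comm, Complex.norm_exp, Complex.norm_exp]
  congr 2 <;> norm_num [pow_two, ← Complex.ofReal_pow]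

lemma tsum_cexp_eq_tsum_hexMixedTerm {c : ℝ} (hc : 0 < c) (u v : ℝ) (l : ℤ) :
    ∑' k : ℤ, Complex.exp (-c * hexForm (k : ℂ) l + 2 * π * Complex.I * (u * k - v * l)) =
      √(π / c) * ∑' m : ℤ, hexMixedTerm c u v l m := by
  have hpoisson := tsum_cexp_neg_mul_int_sq_add hc (u + c * l * Complex.I / (2 * π))
  calc
    _ = Complex.exp (-c * l ^ 2 - 2 * π * Complex.I * v * l) * ∑' k : ℤ, Complex.exp
          (-c * k ^ 2 + 2 * π * Complex.I * (u + c * l * Complex.I / (2 * π)) * k) := by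
      simp_rw [← tsum_mul_left, ← Complex.exp_add, hexForm]
      congr! 3 with k
      field_simp
      linear_combination (-c * k * l : ℂ) * Complex.I_sq
    _ = _ := by
      rw [hpoisson, mul_left_comm, ← tsum_mul_left]
      simp_rw [hexMixedTerm, ← Complex.exp_add]
      congr! 4 with m
      push_cast
      have : (c : ℂ) ≠ 0 := mod_cast hc.ne'
      field_simp
      linear_combination (-4 * c ^ 2 * l ^ 2 : ℂ) * Complex.I_sq

lemma tsum_hexMixedTerm_eq {c : ℝ} (hc : 0 < c) (u v : ℝ) (m : ℤ) :
    ∑' l : ℤ, hexMixedTerm c u v l m = √(π / (3 * c / 4)) *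
      ∑' n : ℤ, (rexp (-(4 * π ^ 2 / 3 / c) * hexForm (m - u) (n - v)) : ℂ) := by
  have hpoisson := tsum_cexp_neg_mul_int_sq_add (a := 3 * c / 4) (by positivity) ((m - u) / 2 - v)
  simp_rw [hexMixedTerm, tsum_mul_left, hpoisson]
  rw [mul_left_comm, ← tsum_mul_left, ← (Equiv.neg ℤ).tsum_eq]
  push_cast
  simp_rw [← Complex.exp_add, hexForm]
  congr! 4 with n
  push_cast [Equiv.neg_apply]
  have : (c : ℂ) ≠ 0 := mod_cast hc.ne'
  field_simp
  ring

theorem tsum_cexp_neg_mul_hexForm {c : ℝ} (hc : 0 < c) (u v : ℝ) :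
    ∑' p : ℤ × ℤ, Complex.exp (-c * hexForm (p.1 : ℂ) p.2 +
        2 * π * Complex.I * (u * p.1 - v * p.2)) =
      ((2 * π / √3 / c * ∑' p : ℤ × ℤ,
        rexp (-(4 * π ^ 2 / 3 / c) * hexForm (p.1 - u) (p.2 - v)) : ℝ) : ℂ) := by
  have hdirect := summable_cexp_neg_mul_hexForm hc u v
  have hdual := summable_exp_neg_mul_hexForm_sub (c := 4 * π ^ 2 / 3 / c) (by positivity) u v
  have hroot : √(π / c) * √(π / (3 * c / 4)) = 2 * π / √3 / c := by
    rw [← sqrt_mul (by positivity), show π / c * (π / (3 * c / 4)) = (2 * π / c) ^ 2 / 3 by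
      field_simp; norm_num, sqrt_div (by positivity), sqrt_sq (by positivity), div_right_comm]
  calc
    _ = ∑' (l : ℤ) (k : ℤ), Complex.exp (-c * hexForm (k : ℂ) l +
          2 * π * Complex.I * (u * k - v * l)) := by
      rw [← (Equiv.prodComm ℤ ℤ).tsum_eq]
      exact hdirect.prod_symm.tsum_prod
    _ = √(π / c) * ∑' (m : ℤ) (l : ℤ), hexMixedTerm c u v l m := by
      simp_rw [tsum_cexp_eq_tsum_hexMixedTerm hc, tsum_mul_left]
      rw [(summable_hexMixedTerm hc u v).tsum_comm]
    _ = _ := by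
      simp_rw [tsum_hexMixedTerm_eq hc, tsum_mul_left]
      rw [hdual.tsum_prod, ← hroot]
      push_cast
      ring

/-- The summand `exp (-c Q) cos (2π(k - l)/3)` of the signed theta series at `p = (k, l)`, with the
parameter `c` related to the nome by `q = exp (-c)`. -/
noncomputable def signedThetaTerm (c : ℝ) (p : ℤ × ℤ) : ℝ :=
  rexp (-c * hexForm (p.1 : ℝ) p.2) * cos (2 * π * (p.1 - p.2) / 3)

/-- The Borwein cubic theta function `b(q)` at `q = exp (-c)`. Junk value `0` for `c ≤ 0`, where
the series diverges. -/
noncomputable def signedTheta (c : ℝ) : ℝ := ∑' p, signedThetaTerm c p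

lemma ofReal_re_cexp_eq_signedThetaTerm (c : ℝ) (p : ℤ × ℤ) :
    (Complex.exp (-c * hexForm (p.1 : ℂ) p.2 +
      2 * π * Complex.I * ((1 / 3 : ℝ) * p.1 - (1 / 3 : ℝ) * p.2))).re = signedThetaTerm c p := by
  have hsplit : -c * hexForm (p.1 : ℂ) p.2 +
      2 * π * Complex.I * ((1 / 3 : ℝ) * p.1 - (1 / 3 : ℝ) * p.2) =
      (-c * hexForm (p.1 : ℝ) p.2 : ℝ) + (2 * π * (p.1 - p.2) / 3 : ℝ) * Complex.I := by
    push_cast [hexForm]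
    ring
  rw [hsplit, Complex.exp_add, ← Complex.ofReal_exp, Complex.re_ofReal_mul,
    Complex.exp_ofReal_mul_I_re, signedThetaTerm]

lemma summable_signedThetaTerm {c : ℝ} (hc : 0 < c) : Summable (signedThetaTerm c) :=
  (Complex.reCLM.summable (summable_cexp_neg_mul_hexForm hc (1 / 3) (1 / 3))).congr
    (ofReal_re_cexp_eq_signedThetaTerm c)

lemma signedTheta_eq_tsum_exp_neg_div {c : ℝ} (hc : 0 < c) :
    signedTheta c = 2 * π / √3 * ∑' p : ℤ × ℤ,
      rexp (-(4 * π ^ 2 / 3 * hexForm (p.1 - 1 / 3 : ℝ) (p.2 - 1 / 3)) / c) / c := by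
  have hre := congr_arg Complex.re (tsum_cexp_neg_mul_hexForm hc (1 / 3) (1 / 3))
  rw [Complex.re_tsum (summable_cexp_neg_mul_hexForm hc _ _), Complex.ofReal_re] at hre
  simp_rw [ofReal_re_cexp_eq_signedThetaTerm] at hre
  rw [signedTheta, hre, tsum_div_const, div_mul_eq_mul_div, mul_div_assoc]
  congr! 4 with p
  ring_nf

lemma strictMonoOn_signedTheta_Ioc : StrictMonoOn signedTheta (Ioc 0 4) := by
  have hmono (p : ℤ × ℤ) : StrictMonoOn (fun c ↦
      rexp (-(4 * π ^ 2 / 3 * hexForm (p.1 - 1 / 3 : ℝ) (p.2 - 1 / 3)) / c) / c) (Ioc 0 4) := by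
    refine (strictMonoOn_exp_neg_div_div _).mono (Ioc_subset_Ioc_right ?_)
    nlinarith [pi_gt_three, one_third_le_hexForm_sub_one_third p.1 p.2]
  have hsum {c : ℝ} (hc : 0 < c) : Summable fun p : ℤ × ℤ ↦
      rexp (-(4 * π ^ 2 / 3 * hexForm (p.1 - 1 / 3 : ℝ) (p.2 - 1 / 3)) / c) / c := by
    refine ((summable_exp_neg_mul_hexForm_sub (c := 4 * π ^ 2 / 3 / c) (by positivity)
      (1 / 3) (1 / 3)).div_const c).congr fun p ↦ ?_
    ring_nf
  intro c hc d hd hcd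
  rw [signedTheta_eq_tsum_exp_neg_div hc.1, signedTheta_eq_tsum_exp_neg_div hd.1]
  gcongr
  exact Summable.tsum_lt_tsum (fun p ↦ (hmono p).monotoneOn hc hd hcd.le)
    (hmono (0, 0) hc hd hcd) (hsum hc.1) (hsum hd.1)

lemma signedThetaTerm_of_mem_hexUnits (c : ℝ) {p : ℤ × ℤ} (hp : p ∈ hexUnits) :
    signedThetaTerm c p = -rexp (-c) / 2 := by
  have hform : hexForm p.1 p.2 = 1 := by revert p; decide
  have hcos : ¬ 3 ∣ p.1 - p.2 := by revert p; decide
  rw [signedThetaTerm, ← intCast_hexForm, hform, ← Int.cast_sub,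
    cos_two_pi_mul_int_div_three hcos]
  push_cast
  ring_nf

lemma signedThetaTerm_sub_le_of_notMem_hexUnits {c d : ℝ} (hc : 4 ≤ c) (hcd : c ≤ d) {p : ℤ × ℤ}
    (hp : p ∉ hexUnits) :
    signedThetaTerm c p - signedThetaTerm d p ≤
      (rexp (-c) - rexp (-d)) * ((1 / 4) ^ p.1.natAbs * (1 / 4) ^ p.2.natAbs) := by
  obtain ⟨k, l⟩ := p
  have hexp : rexp (-d) ≤ rexp (-c) := by gcongr
  rcases eq_or_ne (k, l) 0 with h₀ | h₀
  · obtain ⟨rfl, rfl⟩ := Prod.mk_eq_zero.1 h₀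
    simpa [signedThetaTerm, hexForm] using hcd
  have hgrowth := two_mul_abs_add_abs_le_of_notMem_hexUnits h₀ hp
  simp only [Int.abs_eq_natAbs] at hgrowth
  obtain ⟨n, hn⟩ := Int.eq_ofNat_of_zero_le (show 0 ≤ hexForm k l - 1 by omega)
  have hterm (b : ℝ) : signedThetaTerm b (k, l) =
      rexp (-b) ^ (n + 1) * cos (2 * π * (k - l) / 3) := by
    rw [signedThetaTerm, ← intCast_hexForm, ← sub_add_cancel (hexForm k l) 1, hn, ← exp_nat_mul]
    push_cast
    ring_nf
  have hpow : rexp (-d) ^ (n + 1) ≤ rexp (-c) ^ (n + 1) := by gcongr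
  calc
    _ = (rexp (-c) ^ (n + 1) - rexp (-d) ^ (n + 1)) * cos (2 * π * (k - l) / 3) := by
      rw [hterm, hterm, sub_mul]
    _ ≤ rexp (-c) ^ (n + 1) - rexp (-d) ^ (n + 1) :=
      mul_le_of_le_one_right (sub_nonneg.2 hpow) (cos_le_one _)
    _ ≤ (rexp (-c) - rexp (-d)) * (2 * rexp (-c)) ^ n :=
      pow_succ_sub_pow_succ_le (exp_pos _).le hexp n
    _ ≤ (rexp (-c) - rexp (-d)) * ((1 / 2) ^ 3) ^ n := by
      have hdouble : 2 * rexp (-c) ≤ (1 / 2) ^ 3 := by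
        have : rexp (-c) ≤ rexp (-4) := by gcongr
        linarith [exp_neg_four_le]
      gcongr
    _ ≤ (rexp (-c) - rexp (-d)) * ((1 / 2) ^ 2) ^ (k.natAbs + l.natAbs) := by
      rw [← pow_mul, ← pow_mul]
      refine mul_le_mul_of_nonneg_left ?_ (sub_nonneg.2 hexp)
      exact pow_le_pow_of_le_one (by norm_num) (by norm_num) (by omega)
    _ = _ := by rw [pow_add]; norm_num

lemma strictMonoOn_signedTheta_Ici : StrictMonoOn signedTheta (Ici 4) := by
  intro c hc d hd hcd
  rw [mem_Ici] at hc hd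
  have hexp : 0 < rexp (-c) - rexp (-d) := by
    rw [sub_pos]
    gcongr
  have hgeom := (hasSum_pow_natAbs_mul_pow_natAbs (r := 1 / 4) (by norm_num)
    (by norm_num)).mul_left (rexp (-c) - rexp (-d))
  have hθc := (summable_signedThetaTerm (c := c) (by linarith)).hasSum
  have hθd := (summable_signedThetaTerm (c := d) (by linarith)).hasSum
  have hupper := sum_le_hasSum hexUnits (fun p hp ↦ by
    linarith [signedThetaTerm_sub_le_of_notMem_hexUnits hc hcd.le hp]) ((hθd.sub hθc).add hgeom)
  have hlower : ∑ p ∈ hexUnits, (rexp (-c) - rexp (-d)) / 2 ≤ ∑ p ∈ hexUnits,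
      (signedThetaTerm d p - signedThetaTerm c p +
        (rexp (-c) - rexp (-d)) * ((1 / 4) ^ p.1.natAbs * (1 / 4) ^ p.2.natAbs)) := by
    refine Finset.sum_le_sum fun p hp ↦ ?_
    rw [signedThetaTerm_of_mem_hexUnits c hp, signedThetaTerm_of_mem_hexUnits d hp]
    have : 0 ≤ (rexp (-c) - rexp (-d)) * ((1 / 4) ^ p.1.natAbs * (1 / 4) ^ p.2.natAbs) := by
      positivity
    linarith
  rw [Finset.sum_const, show hexUnits.card = 6 from rfl, nsmul_eq_mul] at hlower
  push_cast at hlower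
  unfold signedTheta
  linarith

theorem strictMonoOn_signedTheta : StrictMonoOn signedTheta (Ioi 0) := by
  rw [← Ioc_union_Ici_eq_Ioi (show (0 : ℝ) < 4 by norm_num)]
  exact strictMonoOn_signedTheta_Ioc.union strictMonoOn_signedTheta_Ici
    (isGreatest_Ioc (by norm_num)) isLeast_Ici

theorem signed_theta_ineq_general (α : ℝ) (hα : 0 < α) :
    (∑' p : ℤ × ℤ,
        Real.exp (-(2 * Real.pi * α / Real.sqrt 3) *
            ((p.1 : ℝ) ^ 2 + (p.1 : ℝ) * (p.2 : ℝ) + (p.2 : ℝ) ^ 2)) *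
          Real.cos (2 * Real.pi * ((p.1 : ℝ) - (p.2 : ℝ)) / 3)) >
      ∑' p : ℤ × ℤ,
        Real.exp (-(Real.pi * α / Real.sqrt 3) *
            ((p.1 : ℝ) ^ 2 + (p.1 : ℝ) * (p.2 : ℝ) + (p.2 : ℝ) ^ 2)) *
          Real.cos (2 * Real.pi * ((p.1 : ℝ) - (p.2 : ℝ)) / 3) := by
  have hc : 0 < π * α / √3 := by positivity
  have hd : 0 < 2 * π * α / √3 := by positivity
  refine strictMonoOn_signedTheta hc hd ?_
  gcongr
  linarith [pi_pos]

/-- For `α > √3·log 5/π`, the signed theta series satisfies `b(q) > b(q^{1/2})`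
with `q = e^{−2πα/√3}`. -/
theorem signed_theta_ineq (α : ℝ) (hα : α > Real.sqrt 3 * Real.log 5 / Real.pi) :
    (∑' p : ℤ × ℤ,
        Real.exp (-(2 * Real.pi * α / Real.sqrt 3) *
            ((p.1 : ℝ) ^ 2 + (p.1 : ℝ) * (p.2 : ℝ) + (p.2 : ℝ) ^ 2)) *
          Real.cos (2 * Real.pi * ((p.1 : ℝ) - (p.2 : ℝ)) / 3)) >
      ∑' p : ℤ × ℤ,
        Real.exp (-(Real.pi * α / Real.sqrt 3) *
            ((p.1 : ℝ) ^ 2 + (p.1 : ℝ) * (p.2 : ℝ) + (p.2 : ℝ) ^ 2)) *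
          Real.cos (2 * Real.pi * ((p.1 : ℝ) - (p.2 : ℝ)) / 3) := by
  exact signed_theta_ineq_general α (lt_trans (by positivity) hα)
end
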